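/- arXiv:1211.0466 — 6 statements merged into one kernel-verified Lean document; each statement's English description precedes it below -/
import Mathlib

section
/- There is a function c₁ : (0,∞) → (0,∞) with c₁(β) → 0 as β → ∞ such that for every β > 0 and every x ∈ [0,∞) with |x − 1| ≥ β one has |x − 1| ≤ c₁(β)·l(x). -/
/-!
The function `ell` is convex on `[0,∞)` and vanishes exactly at `1`, so along each ray starting at
`1` the quotient `ell (1 + s * u) / u` is nondecreasing in `u > 0` (here `s = ±1`) and positive.
Hence for `|x - 1| ≥ β` the ratio `|x - 1| / ell x` is at most `β / ell (1 + β)` on the right of `1`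
and at most `β / ell (1 - β)` on the left. The left case requires `β ≤ 1`, so it does not affect
the limit `β → ∞`; on the right, `ell (1 + β) / β ≥ log (1 + β) - 1 → ∞`.
-/

open MeasureTheory Filter

/-- `l(r) = r·log r − r + 1` (with `l 0 = 1`, since `Real.log 0 = 0`). -/
noncomputable def ell (r : ℝ) : ℝ := r * Real.log r - r + 1

lemma ell_eq_klFun (x : ℝ) : ell x = InformationTheory.klFun x := by
  rw [ell, InformationTheory.klFun_apply]; ring

lemma ell_nonneg {x : ℝ} (hx : 0 ≤ x) : 0 ≤ ell x := by
  rw [ell_eq_klFun]; exact InformationTheory.klFun_nonneg hx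

lemma ell_pos {x : ℝ} (hx : 0 ≤ x) (h1 : x ≠ 1) : 0 < ell x :=
  (ell_nonneg hx).lt_of_ne' fun h =>
    h1 ((InformationTheory.klFun_eq_zero_iff hx).1 (by rwa [← ell_eq_klFun]))

/-- Monotonicity of the secant slopes of `ell` from the point `1`, in the direction `s`. -/
lemma ell_secant {s u β : ℝ} (hβ : 0 < β) (hu : β ≤ u) (hx : 0 ≤ 1 + s * u) :
    u * ell (1 + s * β) ≤ β * ell (1 + s * u) := by
  have hu0 : 0 < u := hβ.trans_le hu
  have h := InformationTheory.convexOn_klFun.2 (Set.mem_Ici.2 zero_le_one) (Set.mem_Ici.2 hx)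
    (sub_nonneg.2 ((div_le_one hu0).2 hu)) (div_pos hβ hu0).le (sub_add_cancel 1 (β / u))
  have e : (1 - β / u) * 1 + β / u * (1 + s * u) = 1 + s * β := by
    field_simp; ring
  simp only [smul_eq_mul, InformationTheory.klFun_one, mul_zero, zero_add, e] at h
  rw [← ell_eq_klFun, ← ell_eq_klFun] at h
  calc u * ell (1 + s * β) ≤ u * (β / u * ell (1 + s * u)) := by gcongr
    _ = β * ell (1 + s * u) := by field_simp

lemma tendsto_div_ell : Tendsto (fun β : ℝ => β / ell (1 + β)) atTop (nhds 0) := by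
  have hlog : Tendsto (fun β : ℝ => Real.log (1 + β) - 1) atTop atTop :=
    tendsto_atTop_add_const_right _ _
      (Real.tendsto_log_atTop.comp (tendsto_atTop_add_const_left _ _ tendsto_id))
  have h : Tendsto (fun β : ℝ => ell (1 + β) / β) atTop atTop := by
    refine tendsto_atTop_mono' _ ?_ hlog
    filter_upwards [eventually_gt_atTop 0] with β hβ
    rw [le_div_iff₀ hβ, ell]
    have : 0 ≤ Real.log (1 + β) := Real.log_nonneg (by linarith)
    linarith
  simpa [Function.comp_def] using tendsto_inv_atTop_zero.comp h

/-- There is `c₁ : (0,∞) → (0,∞)` with `c₁(β) → 0` as `β → ∞` such that for every `β > 0`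
and every `x ≥ 0` with `|x − 1| ≥ β` one has `|x − 1| ≤ c₁(β)·l(x)`. -/
theorem abs_sub_one_le_ell :
    ∃ c₁ : ℝ → ℝ, (∀ β : ℝ, 0 < β → 0 < c₁ β) ∧
      Tendsto c₁ atTop (nhds 0) ∧
      ∀ β : ℝ, 0 < β → ∀ x : ℝ, 0 ≤ x → β ≤ |x - 1| → |x - 1| ≤ c₁ β * ell x := by
  have hR : ∀ β : ℝ, 0 < β → 0 < ell (1 + β) := fun β hβ =>
    ell_pos (by linarith) (by intro h; linarith)
  have hL : ∀ β : ℝ, 0 < β → β ≤ 1 → 0 < ell (1 - β) := fun β hβ h1 =>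
    ell_pos (by linarith) (by intro h; linarith)
  have hL0 : ∀ β : ℝ, 0 < β → 0 ≤ if β ≤ 1 then β / ell (1 - β) else 0 := by
    intro β hβ
    split_ifs with h1
    · exact (div_pos hβ (hL β hβ h1)).le
    · exact le_rfl
  refine ⟨fun β => β / ell (1 + β) + if β ≤ 1 then β / ell (1 - β) else 0, ?_, ?_, ?_⟩
  · intro β hβ
    exact add_pos_of_pos_of_nonneg (div_pos hβ (hR β hβ)) (hL0 β hβ)
  · refine tendsto_div_ell.congr' ?_
    filter_upwards [eventually_gt_atTop 1] with β hβ
    rw [if_neg hβ.not_ge, add_zero]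
  · intro β hβ x hx hxβ
    have hell := ell_nonneg hx
    rcases le_total 1 x with h1 | h1
    · rw [abs_of_nonneg (by linarith)] at hxβ ⊢
      have h := ell_secant (s := 1) hβ hxβ (by linarith)
      rw [one_mul, one_mul, add_sub_cancel] at h
      calc x - 1 ≤ β / ell (1 + β) * ell x := by
            rwa [div_mul_eq_mul_div, le_div_iff₀ (hR β hβ)]
        _ ≤ _ := mul_le_mul_of_nonneg_right (le_add_of_nonneg_right (hL0 β hβ)) hell
    · rw [abs_of_nonpos (by linarith), neg_sub] at hxβ ⊢
      have hβ1 : β ≤ 1 := by linarith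
      have h := ell_secant (s := -1) hβ hxβ (by linarith)
      rw [show 1 + -1 * β = 1 - β by ring, show 1 + -1 * (1 - x) = x by ring] at h
      simp only [if_pos hβ1]
      calc 1 - x ≤ β / ell (1 - β) * ell x := by
            rwa [div_mul_eq_mul_div, le_div_iff₀ (hL β hβ hβ1)]
        _ ≤ _ := mul_le_mul_of_nonneg_right
            (le_add_of_nonneg_left (div_pos hβ (hR β hβ)).le) hell
end

section
/- Let μ be a σ-finite measure on a measurable space E and let h : E → [0,∞) be measurable with ∫_E h² dμ < ∞. Suppose there exists δ > 0 such that ∫_A exp(δ·h²) dμ < ∞ for every measurable set A ⊆ E with μ(A) < ∞. Then for every N ∈ ℕ, sup over g ∈ S^N(μ) of ∫_E h(x)²·(g(x) + 1) μ(dx) is finite. -/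
/-!
The argument rests on Young's inequality `a * b ≤ exp a + ell b` (`mul_le_exp_add_ell`), which
reflects that `ell` is the Legendre dual of `a ↦ exp a - 1`. Split `E` along `A = {1 ≤ h ^ 2}`,
which has finite measure by Markov's inequality.

* On `A`, Young with `a = δ * h ^ 2` gives `h ^ 2 * g ≤ δ⁻¹ * (exp (δ * h ^ 2) + ell g)`, and
  `exp (δ * h ^ 2)` is integrable on `A` by hypothesis.
* Off `A`, Young with `a = 1` gives `h ^ 2 * g ≤ h ^ 2 * (exp 1 + ell g) ≤ exp 1 * h ^ 2 + ell g`.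

Integrating the resulting pointwise bound gives a constant that depends on `g` only through
`∫ ell g ≤ N`.
-/

open MeasureTheory Filter
open scoped ENNReal

/-- Young's inequality for the dual pair `exp` and `ell`. -/
lemma mul_le_exp_add_ell (a : ℝ) {b : ℝ} (hb : 0 ≤ b) : a * b ≤ Real.exp a + ell b := by
  unfold ell
  rcases hb.eq_or_lt with rfl | hb
  · have := Real.exp_pos a
    simp only [mul_zero, zero_mul]
    linarith
  · -- The tangent line of `exp` at `0`, evaluated at `a - log b` and multiplied by `b`.
    have h1 := mul_le_mul_of_nonneg_left (Real.add_one_le_exp (a - Real.log b)) hb.le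
    have h2 : b * Real.exp (a - Real.log b) = Real.exp a := by
      rw [Real.exp_sub, Real.exp_log hb]
      field_simp
    linarith

lemma ell_nonneg_s4 {b : ℝ} (hb : 0 ≤ b) : 0 ≤ ell b := by
  unfold ell
  rcases hb.eq_or_lt with rfl | hb
  · simp
  · have h1 := mul_le_mul_of_nonneg_left (Real.one_sub_inv_le_log_of_pos hb) hb.le
    have h2 : b * (1 - b⁻¹) = b - 1 := by field_simp
    linarith

/-- The pointwise bound used on `A`, with `s = h ^ 2`; the slack term `exp 1 * s` makes it
match the shape of the bound off `A`. -/
lemma mul_add_one_le_of_exp {δ s g : ℝ} (hδ : 0 < δ) (hs : 0 ≤ s) (hg : 0 ≤ g) :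
    s * (g + 1) ≤ (1 + Real.exp 1) * s + (1 + δ⁻¹) * ell g + δ⁻¹ * Real.exp (δ * s) := by
  have h1 := mul_le_mul_of_nonneg_left (mul_le_exp_add_ell (δ * s) hg) (inv_pos.2 hδ).le
  have h2 : δ⁻¹ * (δ * s * g) = s * g := by field_simp
  have h3 := ell_nonneg_s4 hg
  have h4 := mul_nonneg (Real.exp_pos 1).le hs
  linarith

/-- The pointwise bound used off `A`, with `s = h ^ 2`. -/
lemma mul_add_one_le_of_le_one {δ s g : ℝ} (hδ : 0 < δ) (hs : 0 ≤ s) (hs1 : s ≤ 1)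
    (hg : 0 ≤ g) :
    s * (g + 1) ≤ (1 + Real.exp 1) * s + (1 + δ⁻¹) * ell g := by
  have h1 := mul_le_mul_of_nonneg_left (mul_le_exp_add_ell 1 hg) hs
  have h2 := mul_le_mul_of_nonneg_right hs1 (ell_nonneg_s4 hg)
  have h3 := mul_nonneg (inv_pos.2 hδ).le (ell_nonneg_s4 hg)
  linarith

/-- If `h ≥ 0` is measurable with `∫ h² dμ < ∞` and `exp(δ·h²)` is integrable on every
set of finite measure for some `δ > 0`, then `sup_{g ∈ S^N} ∫ h²·(g+1) dμ < ∞`. -/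
theorem sup_lintegral_sq_mul_add_one_lt_top
    {E : Type*} [MeasurableSpace E] (μ : Measure E) [SigmaFinite μ]
    (h : E → ℝ) (hmeas : Measurable h) (hnonneg : ∀ x, 0 ≤ h x)
    (hL2 : ∫⁻ x, ENNReal.ofReal ((h x) ^ 2) ∂μ < ⊤)
    (hexp : ∃ δ : ℝ, 0 < δ ∧ ∀ A : Set E, MeasurableSet A → μ A < ⊤ →
      ∫⁻ x in A, ENNReal.ofReal (Real.exp (δ * (h x) ^ 2)) ∂μ < ⊤)
    (N : ℕ) :
    ∃ C : ℝ≥0∞, C < ⊤ ∧ ∀ g : E → ℝ, Measurable g → (∀ x, 0 ≤ g x) →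
      (∫⁻ x, ENNReal.ofReal (ell (g x)) ∂μ ≤ N) →
      ∫⁻ x, ENNReal.ofReal ((h x) ^ 2 * (g x + 1)) ∂μ ≤ C := by
  obtain ⟨δ, hδ, hint⟩ := hexp
  set A : Set E := {x | 1 ≤ ENNReal.ofReal ((h x) ^ 2)} with hA
  have hsq : Measurable fun x => ENNReal.ofReal ((h x) ^ 2) := by fun_prop
  have hAm : MeasurableSet A := measurableSet_le measurable_const hsq
  have hAfin : μ A < ⊤ := by
    have hmarkov := mul_meas_ge_le_lintegral (μ := μ) hsq 1
    rw [one_mul] at hmarkov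
    exact hmarkov.trans_lt hL2
  have hAint := hint A hAm hAfin
  have hδ' : 0 ≤ δ⁻¹ := (inv_pos.2 hδ).le
  have he : 0 ≤ 1 + Real.exp 1 := by positivity
  refine ⟨ENNReal.ofReal (1 + Real.exp 1) * (∫⁻ x, ENNReal.ofReal ((h x) ^ 2) ∂μ)
    + ENNReal.ofReal (1 + δ⁻¹) * N
    + ENNReal.ofReal δ⁻¹ * ∫⁻ x in A, ENNReal.ofReal (Real.exp (δ * (h x) ^ 2)) ∂μ, ?_, ?_⟩
  · exact ENNReal.add_lt_top.2 ⟨ENNReal.add_lt_top.2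
      ⟨ENNReal.mul_lt_top ENNReal.ofReal_lt_top hL2,
        ENNReal.mul_lt_top ENNReal.ofReal_lt_top (ENNReal.natCast_lt_top N)⟩,
      ENNReal.mul_lt_top ENNReal.ofReal_lt_top hAint⟩
  intro g hg hg0 hgN
  have hell : Measurable fun x => ENNReal.ofReal (ell (g x)) := by
    unfold ell
    fun_prop
  have hexpm : Measurable fun x => ENNReal.ofReal (Real.exp (δ * (h x) ^ 2)) := by fun_prop
  have hpt : ∀ x, ENNReal.ofReal ((h x) ^ 2 * (g x + 1)) ≤
      ENNReal.ofReal (1 + Real.exp 1) * ENNReal.ofReal ((h x) ^ 2)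
      + ENNReal.ofReal (1 + δ⁻¹) * ENNReal.ofReal (ell (g x))
      + ENNReal.ofReal δ⁻¹ *
        A.indicator (fun x => ENNReal.ofReal (Real.exp (δ * (h x) ^ 2))) x := by
    intro x
    have h1 : 0 ≤ (1 + Real.exp 1) * (h x) ^ 2 := by positivity
    have h2 : 0 ≤ (1 + δ⁻¹) * ell (g x) := mul_nonneg (by linarith) (ell_nonneg_s4 (hg0 x))
    by_cases hx : x ∈ A
    · rw [Set.indicator_of_mem hx, ← ENNReal.ofReal_mul he, ← ENNReal.ofReal_mul (by linarith),
        ← ENNReal.ofReal_mul hδ', ← ENNReal.ofReal_add h1 h2,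
        ← ENNReal.ofReal_add (add_nonneg h1 h2) (by positivity)]
      exact ENNReal.ofReal_le_ofReal (mul_add_one_le_of_exp hδ (sq_nonneg _) (hg0 x))
    · have hs1 : (h x) ^ 2 ≤ 1 := by
        rw [hA, Set.mem_ofPred_eq, not_le, ENNReal.ofReal_lt_one] at hx
        exact hx.le
      rw [Set.indicator_of_notMem hx, mul_zero, add_zero, ← ENNReal.ofReal_mul he,
        ← ENNReal.ofReal_mul (by linarith), ← ENNReal.ofReal_add h1 h2]
      exact ENNReal.ofReal_le_ofReal
        (mul_add_one_le_of_le_one hδ (sq_nonneg _) hs1 (hg0 x))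
  refine (lintegral_mono hpt).trans ?_
  rw [lintegral_add_left (by fun_prop), lintegral_add_left (by fun_prop),
    lintegral_const_mul _ hsq, lintegral_const_mul _ hell,
    lintegral_const_mul _ (hexpm.indicator hAm), lintegral_indicator hAm]
  gcongr
end

section
/- Let μ be a σ-finite measure on a measurable space E and let h : E → [0,∞) be measurable with ∫_E h² dμ < ∞. Suppose there exists δ > 0 such that ∫_A exp(δ·h²) dμ < ∞ for every measurable set A ⊆ E with μ(A) < ∞. Then for every N ∈ ℕ, sup over g ∈ S^N(μ) of ∫_E h(x)·|g(x) − 1| μ(dx) is finite. -/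
/-!
The function `ell` is the convex conjugate of `t ↦ exp t - 1`, so `t * r ≤ ell r + exp t - 1` for
all real `t` and all `r ≥ 0` (`mul_le_ell_add_exp`). Using this with `t = ± h x` bounds
`h * |g - 1|` pointwise:

* where `h ≤ 1`, the remainder `exp t - 1 - t` is at most `t ^ 2`, so `h * |g - 1| ≤ ell g + h ^ 2`;
* where `1 ≤ h`, `h * |g - 1| ≤ ell g + 2 * exp h`, and `h ≤ δ * h ^ 2 + 1 / (4 * δ)` by AM-GM, so
  the remainder is at most a constant times `exp (δ * h ^ 2)`.

The set `{1 ≤ h}` has finite measure by Markov's inequality applied to `h ^ 2`, so integrating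
these bounds gives `N + ∫ h ^ 2 + K * ∫_{1 ≤ h} exp (δ * h ^ 2)`, which does not depend on `g`.
-/

open MeasureTheory Filter
open scoped ENNReal

/-- Young's inequality for the conjugate pair `ell` and `t ↦ exp t - 1`. -/
lemma mul_le_ell_add_exp (t : ℝ) {r : ℝ} (hr : 0 ≤ r) :
    t * r ≤ ell r + Real.exp t - 1 := by
  unfold ell
  rcases hr.eq_or_lt with rfl | hr
  · have := Real.exp_pos t
    simp [this.le]
  · -- Factor `exp t = r * exp (t - log r)` and use `1 + u ≤ exp u`.
    have h1 := Real.add_one_le_exp (t - Real.log r)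
    have h2 : Real.exp t = r * Real.exp (t - Real.log r) := by
      rw [Real.exp_sub, Real.exp_log hr]
      field_simp
    rw [h2]
    nlinarith [mul_le_mul_of_nonneg_left h1 hr.le]

lemma mul_abs_sub_one_le_of_le_one {t r : ℝ} (ht0 : 0 ≤ t) (ht1 : t ≤ 1) (hr : 0 ≤ r) :
    t * |r - 1| ≤ ell r + t ^ 2 := by
  have h1 := mul_le_ell_add_exp t hr
  have h2 := mul_le_ell_add_exp (-t) hr
  have h3 := (abs_le.1 (Real.abs_exp_sub_one_sub_id_le (x := t) (by rwa [abs_of_nonneg ht0]))).2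
  have h4 := (abs_le.1 (Real.abs_exp_sub_one_sub_id_le (x := -t)
    (by rwa [abs_neg, abs_of_nonneg ht0]))).2
  rcases abs_cases (r - 1) with ⟨h, _⟩ | ⟨h, _⟩ <;> rw [h] <;> nlinarith

lemma mul_abs_sub_one_le_exp {δ t r : ℝ} (hδ : 0 < δ) (ht0 : 0 ≤ t) (hr : 0 ≤ r) :
    t * |r - 1| ≤ ell r + 2 * Real.exp (1 / (4 * δ)) * Real.exp (δ * t ^ 2) := by
  have h1 := mul_le_ell_add_exp t hr
  have h2 := Real.add_one_le_exp t
  have h3 : |r - 1| ≤ r + 1 := abs_le.2 ⟨by linarith, by linarith⟩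
  have h4 : t ≤ 1 / (4 * δ) + δ * t ^ 2 := by
    have : 1 / (4 * δ) + δ * t ^ 2 - t = (2 * δ * t - 1) ^ 2 / (4 * δ) := by
      field_simp
      ring
    have : 0 ≤ (2 * δ * t - 1) ^ 2 / (4 * δ) := by positivity
    linarith
  have h5 := Real.exp_le_exp.2 h4
  rw [Real.exp_add] at h5
  nlinarith [mul_le_mul_of_nonneg_left h3 ht0]

lemma ell_nonneg_s5 {r : ℝ} (hr : 0 ≤ r) : 0 ≤ ell r := by
  simpa using mul_le_ell_add_exp 0 hr

/-- If `h ≥ 0` is measurable with `∫ h² dμ < ∞` and `exp(δ·h²)` is integrable on every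
set of finite measure for some `δ > 0`, then `sup_{g ∈ S^N} ∫ h·|g−1| dμ < ∞`. -/
theorem sup_lintegral_mul_abs_sub_one_lt_top
    {E : Type*} [MeasurableSpace E] (μ : Measure E) [SigmaFinite μ]
    (h : E → ℝ) (hmeas : Measurable h) (hnonneg : ∀ x, 0 ≤ h x)
    (hL2 : ∫⁻ x, ENNReal.ofReal ((h x) ^ 2) ∂μ < ⊤)
    (hexp : ∃ δ : ℝ, 0 < δ ∧ ∀ A : Set E, MeasurableSet A → μ A < ⊤ →
      ∫⁻ x in A, ENNReal.ofReal (Real.exp (δ * (h x) ^ 2)) ∂μ < ⊤)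
    (N : ℕ) :
    ∃ C : ℝ≥0∞, C < ⊤ ∧ ∀ g : E → ℝ, Measurable g → (∀ x, 0 ≤ g x) →
      (∫⁻ x, ENNReal.ofReal (ell (g x)) ∂μ ≤ N) →
      ∫⁻ x, ENNReal.ofReal (h x * |g x - 1|) ∂μ ≤ C := by
  obtain ⟨δ, hδ, hA⟩ := hexp
  set A : Set E := {x | 1 ≤ h x} with hAdef
  have hAm : MeasurableSet A := measurableSet_le measurable_const hmeas
  have hAfin : μ A < ⊤ := by
    refine lt_of_le_of_lt ?_ hL2
    rw [← lintegral_indicator_one hAm]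
    refine lintegral_mono fun x => ?_
    by_cases hx : x ∈ A
    · have hx' : 1 ≤ h x := hx
      rw [Set.indicator_of_mem hx, Pi.one_apply, ENNReal.one_le_ofReal]
      nlinarith
    · simp [Set.indicator_of_notMem hx]
  set K : ℝ := 2 * Real.exp (1 / (4 * δ)) with hK
  have hK0 : 0 ≤ K := by positivity
  set I := ∫⁻ x in A, ENNReal.ofReal (Real.exp (δ * (h x) ^ 2)) ∂μ with hI
  refine ⟨N + ∫⁻ x, ENNReal.ofReal ((h x) ^ 2) ∂μ + ENNReal.ofReal K * I, ?_, ?_⟩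
  · exact ENNReal.add_lt_top.2 ⟨ENNReal.add_lt_top.2 ⟨ENNReal.natCast_lt_top N, hL2⟩,
      ENNReal.mul_lt_top ENNReal.ofReal_lt_top (hA A hAm hAfin)⟩
  intro g hg hg0 hgN
  have hm1 : Measurable fun x => ENNReal.ofReal (ell (g x)) := by
    unfold ell
    fun_prop
  have hm2 : Measurable fun x => ENNReal.ofReal ((h x) ^ 2) := by fun_prop
  have hm3 : Measurable fun x => ENNReal.ofReal (Real.exp (δ * (h x) ^ 2)) := by fun_prop
  calc ∫⁻ x, ENNReal.ofReal (h x * |g x - 1|) ∂μ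
      ≤ ∫⁻ x, (ENNReal.ofReal (ell (g x)) + ENNReal.ofReal ((h x) ^ 2)
          + A.indicator (fun x => ENNReal.ofReal K *
              ENNReal.ofReal (Real.exp (δ * (h x) ^ 2))) x) ∂μ := by
        refine lintegral_mono fun x => ?_
        by_cases hx : x ∈ A
        · rw [Set.indicator_of_mem hx, ← ENNReal.ofReal_mul hK0, add_right_comm,
            ← ENNReal.ofReal_add (ell_nonneg_s5 (hg0 x)) (by positivity)]
          exact (ENNReal.ofReal_le_ofReal
            (mul_abs_sub_one_le_exp hδ (hnonneg x) (hg0 x))).trans le_self_add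
        · rw [Set.indicator_of_notMem hx, add_zero,
            ← ENNReal.ofReal_add (ell_nonneg_s5 (hg0 x)) (by positivity)]
          exact ENNReal.ofReal_le_ofReal
            (mul_abs_sub_one_le_of_le_one (hnonneg x) (not_le.1 hx).le (hg0 x))
    _ = ∫⁻ x, ENNReal.ofReal (ell (g x)) ∂μ + ∫⁻ x, ENNReal.ofReal ((h x) ^ 2) ∂μ
          + ENNReal.ofReal K * I := by
        rw [lintegral_add_left (by fun_prop), lintegral_add_left hm1, lintegral_indicator hAm,
          lintegral_const_mul _ hm3]
    _ ≤ _ := by gcongr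
end

section
/- Fix N ∈ ℕ. Let h : [0,T] × 𝕏 → [0,∞) be measurable with ∫ h² dν_T < ∞ and such that for every δ > 0 and every measurable set E ⊆ [0,T] × 𝕏 with ν_T(E) < ∞ one has ∫_E exp(δ·h) dν_T < ∞. Then for every η > 0 there exists δ' > 0 such that for every measurable set A ⊆ [0,T] with Lebesgue measure λ_T(A) ≤ δ', one has sup over g ∈ S^N(ν_T) of ∫_A ∫_𝕏 h(s,v)·|g(s,v) − 1| ν(dv) ds ≤ η. -/
/-!
The function `r ↦ ell (1 + r)` has convex conjugate `x ↦ exp x - 1 - x`, so Young's inequality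
gives `x * |r - 1| ≤ ell r + (exp x - 1 - x)` for `x, r ≥ 0` (`mul_abs_sub_one_le`). Applied with
`x = M * h` and divided by `M`, it bounds `h * |g - 1|` by `ell g / M + F / M`, where
`F = exp (M * h) - 1 - M * h`. The first term integrates to at most `N / M`, uniformly over
`g ∈ S^N`, and `M` is chosen so that this is at most `η / 2`. The function `F` no longer depends
on `g` and is integrable (`lintegral_exp_sub_lt_top`): it is `O(h ^ 2)` where `h < 1`, and
`{1 ≤ h}` has finite measure by Chebyshev, so the exponential moments apply there. Absolute
continuity of the integral of its time marginal then makes the second term small.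
-/

open MeasureTheory Filter
open scoped ENNReal

/-- `g ∈ S^N(μ)`: `g` is measurable, nonnegative, and `∫ l(g) dμ ≤ N`. -/
def MemSN {α : Type*} [MeasurableSpace α] (μ : Measure α) (N : ℕ) (g : α → ℝ) : Prop :=
  Measurable g ∧ (∀ p, 0 ≤ g p) ∧ ∫⁻ p, ENNReal.ofReal (ell (g p)) ∂μ ≤ N

/-- Young's inequality for `ell`. -/
theorem mul_abs_sub_one_le {x r : ℝ} (hx : 0 ≤ x) (hr : 0 ≤ r) :
    x * |r - 1| ≤ ell r + (Real.exp x - 1 - x) := by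
  have key : ∀ y : ℝ, y * r ≤ r * Real.log r - r + Real.exp y := by
    intro y
    rcases hr.eq_or_lt with rfl | hr
    · simpa using (Real.exp_pos y).le
    · -- the tangent line bound for `exp` at `y - log r`, multiplied by `r`
      have h1 := mul_le_mul_of_nonneg_left (Real.add_one_le_exp (y - Real.log r)) hr.le
      rw [Real.exp_sub, Real.exp_log hr, mul_div_cancel₀ _ hr.ne'] at h1
      linarith
  unfold ell
  rcases le_total 1 r with h1 | h1
  · rw [abs_of_nonneg (by linarith)]
    linarith [key x]
  · rw [abs_of_nonpos (by linarith)]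
    -- for `r ≤ 1` the conjugate variable is `-x`, and `exp (-x) + x ≤ exp x - x`
    have h2 := Real.self_le_sinh_iff.2 hx
    rw [Real.sinh_eq] at h2
    linarith [key (-x)]

theorem exp_sub_one_sub_le {y : ℝ} (hy : 0 ≤ y) :
    Real.exp y - 1 - y ≤ y ^ 2 * Real.exp y := by
  have h1 : Real.exp y - 1 ≤ y * Real.exp y := by
    have h2 := mul_le_mul_of_nonneg_right (Real.add_one_le_exp (-y)) (Real.exp_pos y).le
    rw [← Real.exp_add, neg_add_cancel, Real.exp_zero] at h2
    linarith
  nlinarith [mul_le_mul_of_nonneg_left h1 hy]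

/-- Square integrability handles the region `h < 1`, the exponential moments the region `1 ≤ h`. -/
theorem lintegral_exp_sub_lt_top {α : Type*} [MeasurableSpace α] (μ : Measure α)
    (h : α → ℝ) (hmeas : Measurable h) (hnonneg : ∀ p, 0 ≤ h p)
    (hL2 : ∫⁻ p, ENNReal.ofReal ((h p) ^ 2) ∂μ < ⊤)
    (hexp : ∀ δ : ℝ, 0 < δ → ∀ E : Set α, MeasurableSet E → μ E < ⊤ →
      ∫⁻ p in E, ENNReal.ofReal (Real.exp (δ * h p)) ∂μ < ⊤)
    {M : ℝ} (hM : 0 < M) :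
    ∫⁻ p, ENNReal.ofReal (Real.exp (M * h p) - 1 - M * h p) ∂μ < ⊤ := by
  set E : Set α := {p | 1 ≤ h p} with hE
  have hEm : MeasurableSet E := measurableSet_le measurable_const hmeas
  have hEfin : μ E < ⊤ := by
    have h1 := mul_meas_ge_le_lintegral (μ := μ) (hmeas.pow_const 2).ennreal_ofReal 1
    rw [one_mul] at h1
    refine lt_of_le_of_lt (le_trans (measure_mono fun p hp => ?_) h1) hL2
    have hp : 1 ≤ h p := hp
    exact ENNReal.one_le_ofReal.2 (one_le_pow₀ hp)
  rw [← lintegral_add_compl _ hEm]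
  refine ENNReal.add_lt_top.2 ⟨lt_of_le_of_lt (lintegral_mono fun p => ?_) (hexp M hM E hEm hEfin),
    lt_of_le_of_lt (b := ∫⁻ p, ENNReal.ofReal (M ^ 2 * Real.exp M) * ENNReal.ofReal ((h p) ^ 2) ∂μ)
      ?_ ?_⟩
  · have := mul_nonneg hM.le (hnonneg p)
    exact ENNReal.ofReal_le_ofReal (by linarith)
  · refine (setLIntegral_mono' hEm.compl fun p hp => ?_).trans (setLIntegral_le_lintegral _ _)
    have hp : h p < 1 := not_le.1 hp
    rw [← ENNReal.ofReal_mul (by positivity)]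
    refine ENNReal.ofReal_le_ofReal ((exp_sub_one_sub_le (mul_nonneg hM.le (hnonneg p))).trans ?_)
    have h1 : Real.exp (M * h p) ≤ Real.exp M := Real.exp_le_exp.2 (by nlinarith)
    calc (M * h p) ^ 2 * Real.exp (M * h p) ≤ (M * h p) ^ 2 * Real.exp M := by gcongr
      _ = M ^ 2 * Real.exp M * h p ^ 2 := by ring
  · rw [lintegral_const_mul _ (hmeas.pow_const 2).ennreal_ofReal]
    exact ENNReal.mul_lt_top ENNReal.ofReal_lt_top hL2

/-- Absolute continuity, in the first variable, of an integral over a product. -/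
theorem exists_pos_setLIntegral_prod_univ_le {α β : Type*} [MeasurableSpace α]
    [MeasurableSpace β] (μ : Measure α) (ν : Measure β) [SFinite μ] [SFinite ν]
    (f : α × β → ℝ≥0∞) (hf : Measurable f) (hfin : ∫⁻ p, f p ∂(μ.prod ν) < ⊤)
    {ε : ℝ≥0∞} (hε : ε ≠ 0) :
    ∃ δ : ℝ, 0 < δ ∧ ∀ A : Set α, μ A ≤ ENNReal.ofReal δ →
      ∫⁻ p in A ×ˢ (Set.univ : Set β), f p ∂(μ.prod ν) ≤ ε := by
  rw [lintegral_prod _ hf.aemeasurable] at hfin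
  obtain ⟨d, hd, hA⟩ := exists_pos_setLIntegral_lt_of_measure_lt hfin.ne hε
  obtain ⟨δ, hδ0, hδd⟩ := ENNReal.lt_iff_exists_nnreal_btwn.1 hd
  refine ⟨δ, by simpa using hδ0, fun A hle => ?_⟩
  rw [← Measure.prod_restrict, Measure.restrict_univ, lintegral_prod _ hf.aemeasurable]
  rw [ENNReal.ofReal_coe_nnreal] at hle
  exact (hA A (hle.trans_lt hδd)).le

/-- For nonnegative `h` square-integrable with all exponential moments on finite-measure
sets: for every `η > 0` there is `δ' > 0` such that for every measurable `A ⊆ [0,T]` of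
Lebesgue measure at most `δ'`, `sup_{g ∈ S^N} ∫_A ∫_𝕏 h·|g−1| dν ds ≤ η`. -/
theorem sup_lintegral_small_time_set_le
    {𝕏 : Type*} [TopologicalSpace 𝕏] [PolishSpace 𝕏] [LocallyCompactSpace 𝕏]
    [MeasurableSpace 𝕏] [BorelSpace 𝕏]
    (ν : Measure 𝕏) [IsFiniteMeasureOnCompacts ν]
    (T : ℝ) (hT : 0 < T) (N : ℕ)
    (νT : Measure (ℝ × 𝕏)) (hνT : νT = (volume.restrict (Set.Icc (0:ℝ) T)).prod ν)
    (h : ℝ × 𝕏 → ℝ) (hmeas : Measurable h) (hnonneg : ∀ p, 0 ≤ h p)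
    (hL2 : ∫⁻ p, ENNReal.ofReal ((h p) ^ 2) ∂νT < ⊤)
    (hexp : ∀ δ : ℝ, 0 < δ → ∀ E : Set (ℝ × 𝕏), MeasurableSet E → νT E < ⊤ →
      ∫⁻ p in E, ENNReal.ofReal (Real.exp (δ * h p)) ∂νT < ⊤) :
    ∀ η : ℝ, 0 < η → ∃ δ' : ℝ, 0 < δ' ∧
      ∀ A : Set ℝ, MeasurableSet A → A ⊆ Set.Icc 0 T →
        volume A ≤ ENNReal.ofReal δ' →
        ∀ g : ℝ × 𝕏 → ℝ, MemSN νT N g →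
          ∫⁻ p in A ×ˢ (Set.univ : Set 𝕏), ENNReal.ofReal (h p * |g p - 1|) ∂νT
            ≤ ENNReal.ofReal η := by
  intro η hη
  -- `M` is chosen so that `N / M ≤ η / 2`
  set M : ℝ := 2 * (N + 1) / η with hMdef
  have hM : 0 < M := by positivity
  have hFm : Measurable fun p => ENNReal.ofReal ((Real.exp (M * h p) - 1 - M * h p)) := by
    fun_prop
  have hF := lintegral_exp_sub_lt_top νT h hmeas hnonneg hL2 hexp hM
  have hη2 : ENNReal.ofReal (M * (η / 2)) ≠ 0 := by
    have : 0 < M * (η / 2) := by positivity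
    simpa using this
  subst hνT
  obtain ⟨δ, hδ, hA⟩ := exists_pos_setLIntegral_prod_univ_le _ ν _ hFm hF hη2
  refine ⟨δ, hδ, fun A hAm hAT hAδ g ⟨hgm, hg0, hgN⟩ => ?_⟩
  have hFA := hA A ((Measure.restrict_apply_le _ A).trans hAδ)
  set νT := (volume.restrict (Set.Icc (0:ℝ) T)).prod ν
  have hellm : Measurable fun p => ENNReal.ofReal (ell (g p)) := by
    unfold ell
    fun_prop
  calc ∫⁻ p in A ×ˢ (Set.univ : Set 𝕏), ENNReal.ofReal (h p * |g p - 1|) ∂νT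
      ≤ ∫⁻ p in A ×ˢ (Set.univ : Set 𝕏), ENNReal.ofReal M⁻¹ * (ENNReal.ofReal (ell (g p)) +
          ENNReal.ofReal (Real.exp (M * h p) - 1 - M * h p)) ∂νT := by
        refine lintegral_mono fun p => ?_
        have hy := mul_abs_sub_one_le (mul_nonneg hM.le (hnonneg p)) (hg0 p)
        have hle : h p * |g p - 1| ≤
            M⁻¹ * (ell (g p) + (Real.exp (M * h p) - 1 - M * h p)) := by
          rw [← div_eq_inv_mul, le_div_iff₀ hM]
          linarith
        refine (ENNReal.ofReal_le_ofReal hle).trans ?_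
        rw [ENNReal.ofReal_mul (by positivity)]
        gcongr
        exact ENNReal.ofReal_add_le
    _ = ENNReal.ofReal M⁻¹ * (∫⁻ p in A ×ˢ (Set.univ : Set 𝕏), ENNReal.ofReal (ell (g p)) ∂νT +
          ∫⁻ p in A ×ˢ (Set.univ : Set 𝕏),
            ENNReal.ofReal (Real.exp (M * h p) - 1 - M * h p) ∂νT) := by
        rw [lintegral_const_mul, lintegral_add_left hellm]
        exact hellm.add hFm
    _ ≤ ENNReal.ofReal M⁻¹ * (ENNReal.ofReal N + ENNReal.ofReal (M * (η / 2))) := by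
        rw [ENNReal.ofReal_natCast]
        gcongr
        exact (setLIntegral_le_lintegral _ _).trans hgN
    _ = ENNReal.ofReal (M⁻¹ * (N + M * (η / 2))) := by
        rw [← ENNReal.ofReal_add (by positivity) (by positivity),
          ← ENNReal.ofReal_mul (by positivity)]
    _ ≤ ENNReal.ofReal η := by
        refine ENNReal.ofReal_le_ofReal ?_
        rw [← div_eq_inv_mul, div_le_iff₀ hM]
        have : M * η = 2 * (N + 1) := by
          rw [hMdef]
          field_simp
        linarith
end

section
/- Let H be a separable real Hilbert space and let S : [0,∞) → L(H) be a family of bounded linear operators on H satisfying: S(0) = id, S(t + s) = S(t) ∘ S(s) for all t, s ≥ 0, for each x ∈ H the map t ↦ S(t)x is continuous on [0,∞), and S(t) is a compact operator for every t > 0. Fix T > 0 and let 𝒟 be a uniformly integrable family of Bochner-integrable functions f : [0,T] → H, i.e. (I) sup_{f∈𝒟} ∫₀ᵀ ‖f(s)‖ ds < ∞, and (II) for every η > 0 there is δ > 0 such that ∫_A ‖f(s)‖ ds ≤ η for every f ∈ 𝒟 and every measurable A ⊆ [0,T] with Lebesgue measure λ(A) ≤ δ. Then the set 𝒴 = { t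 ↦ ∫₀ᵗ S(t − s) f(s) ds : f ∈ 𝒟 } is a relatively compact subset of C([0,T], H) equipped with the supremum norm. -/
/-!
For `f ∈ 𝒟` write `y t = ∫₀ᵗ S(t-s) f(s) ds`. By the semigroup law
`y (t+h) - S(h) y(t) = ∫ₜ^{t+h} S(t+h-s) f(s) ds`, which is bounded by `M ∫ₜ^{t+h} ‖f‖`, with `M` a
bound for `‖S‖` on `[0,T]` (Banach–Steinhaus); see `norm_semigroupConv_sub_le`. By uniform
integrability this is small, uniformly in `t` and `f`, once `h` is small. Everything else follows from this
approximate invariance `y (t+h) ≈ S(h) y(t)` together with `y 0 = 0` and a uniform bound on `y`: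

* The set `K` of all values `y t` is totally bounded (`totallyBounded_values`): for a fixed small
  `h > 0`, each value with `t ≥ h` is close to a point of the relatively compact set
  `S(h)(ball)`, and each value with `t < h` is close to `0`.
* `S(h) → id` uniformly on `K` as `h → 0`, since strong convergence of a bounded family of operators
  is uniform on totally bounded sets (`uniform_strong_continuity`). Hence
  `y (t+h) - y t = (y (t+h) - S(h) y t) + (S(h) - id) y t` is uniformly small
  (`equicontinuity_values`). No operator-norm continuity of `S` is needed.

The Arzelà–Ascoli theorem concludes.
-/


open MeasureTheory Filter
open scoped ENNReal

/-- The convolution `t ↦ ∫₀ᵗ S(t-s) f(s) ds`. -/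
noncomputable def semigroupConv {H : Type*} [NormedAddCommGroup H] [NormedSpace ℝ H]
    (S : ℝ → H →L[ℝ] H) (f : ℝ → H) (t : ℝ) : H :=
  ∫ s in Set.Icc 0 t, (S (t - s)) (f s)

section Helpers

variable {H : Type*} [NormedAddCommGroup H] [NormedSpace ℝ H] {S : ℝ → H →L[ℝ] H} {T M : ℝ}

lemma exists_norm_bound [CompleteSpace H]
    (hScont : ∀ x : H, ContinuousOn (fun t => S t x) (Set.Ici 0)) (T : ℝ) :
    ∃ M : ℝ, 0 ≤ M ∧ ∀ t ∈ Set.Icc 0 T, ‖S t‖ ≤ M := by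
  obtain ⟨C, hC⟩ := banach_steinhaus (g := fun t : Set.Icc (0:ℝ) T => S t) (fun x => by
    obtain ⟨C, hC⟩ := isCompact_Icc.exists_bound_of_continuousOn
      ((hScont x).mono (Set.Icc_subset_Ici_self : Set.Icc (0:ℝ) T ⊆ _))
    exact ⟨C, fun i => hC i i.2⟩)
  exact ⟨max C 0, le_max_right _ _, fun t ht => (hC ⟨t, ht⟩).trans (le_max_left _ _)⟩

lemma integrableOn_conv
    (hScont : ∀ x : H, ContinuousOn (fun t => S t x) (Set.Ici 0)) (hT : 0 ≤ T)
    (hM0 : 0 ≤ M) (hM : ∀ t ∈ Set.Icc 0 T, ‖S t‖ ≤ M)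
    {f : ℝ → H} (hf : IntegrableOn f (Set.Icc 0 T)) {t : ℝ} (htT : t ≤ T) :
    IntegrableOn (fun s => S (t - s) (f s)) (Set.Icc 0 t) := by
  -- Freezing `S` outside `[0,T]` gives a globally bounded, jointly continuous `(u, x) ↦ P u x`.
  let P : ℝ → H →L[ℝ] H := fun u => S (Set.projIcc 0 T hT u)
  have hP : Continuous (fun p : ℝ × H => P p.1 p.2) := by
    refine continuous_prod_of_continuous_lipschitzWith' _ ⟨M, hM0⟩ (fun u => ?_) (fun x => ?_)
    · exact (P u).lipschitz.weaken (hM _ (Set.projIcc 0 T hT u).2)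
    · exact (hScont x).comp_continuous (continuous_subtype_val.comp continuous_projIcc)
        (fun u => (Set.projIcc 0 T hT u).2.1)
  have hf' : IntegrableOn f (Set.Icc 0 t) := hf.mono_set (Set.Icc_subset_Icc_right htT)
  have hmeas : AEStronglyMeasurable (fun s => P (t - s) (f s)) (volume.restrict (Set.Icc 0 t)) :=
    hP.comp_aestronglyMeasurable
      (((continuous_const.sub continuous_id).aestronglyMeasurable).prodMk hf'.1)
  have hint : IntegrableOn (fun s => P (t - s) (f s)) (Set.Icc 0 t) :=
    (hf'.norm.const_mul M).mono' hmeas (Eventually.of_forall fun s =>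
      (P (t - s)).le_of_opNorm_le (hM _ (Set.projIcc 0 T hT _).2) _)
  refine hint.congr_fun (fun s hs => ?_) measurableSet_Icc
  have : t - s ∈ Set.Icc 0 T := ⟨by linarith [hs.2], by linarith [hs.1]⟩
  simp only [P, Set.projIcc_of_mem hT this]

lemma semigroupConv_zero (f : ℝ → H) : semigroupConv S f 0 = 0 := by
  simp [semigroupConv]

/-- Approximate invariance of the convolution under the semigroup. -/
lemma norm_semigroupConv_sub_le [CompleteSpace H]
    (hSsem : ∀ t s : ℝ, 0 ≤ t → 0 ≤ s → S (t + s) = (S t).comp (S s))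
    (hScont : ∀ x : H, ContinuousOn (fun t => S t x) (Set.Ici 0))
    (hM0 : 0 ≤ M) (hM : ∀ t ∈ Set.Icc 0 T, ‖S t‖ ≤ M)
    {f : ℝ → H} (hf : IntegrableOn f (Set.Icc 0 T)) {t h : ℝ} (ht : 0 ≤ t) (hh : 0 ≤ h)
    (hthT : t + h ≤ T) :
    ‖semigroupConv S f (t + h) - S h (semigroupConv S f t)‖
      ≤ M * ∫ s in Set.Icc t (t + h), ‖f s‖ := by
  have hT : 0 ≤ T := by linarith
  have hI1 := integrableOn_conv hScont hT hM0 hM hf hthT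
  have hI0 := integrableOn_conv hScont hT hM0 hM hf (show t ≤ T by linarith)
  have hU : Set.Icc 0 (t + h) = Set.Icc 0 t ∪ Set.Ioc t (t + h) :=
    (Set.Icc_union_Ioc_eq_Icc ht (by linarith)).symm
  have hdisj : Disjoint (Set.Icc 0 t) (Set.Ioc t (t + h)) :=
    Set.disjoint_left.2 fun s h1 h2 => absurd h1.2 (not_le.2 h2.1)
  have hsplit : semigroupConv S f (t + h) = S h (semigroupConv S f t)
      + ∫ s in Set.Ioc t (t + h), S (t + h - s) (f s) := by
    unfold semigroupConv
    rw [hU] at hI1 ⊢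
    rw [setIntegral_union hdisj measurableSet_Ioc hI1.left_of_union hI1.right_of_union,
      ← (S h).integral_comp_comm hI0]
    congr 1
    refine setIntegral_congr_fun measurableSet_Icc fun s hs => ?_
    have : t + h - s = h + (t - s) := by ring
    simp only [this, hSsem h (t - s) hh (by linarith [hs.2]), ContinuousLinearMap.comp_apply]
  have hf' : IntegrableOn (fun s => ‖f s‖) (Set.Icc t (t + h)) :=
    (hf.mono_set (Set.Icc_subset_Icc ht hthT)).norm
  rw [hsplit, add_sub_cancel_left, ← integral_const_mul, integral_Icc_eq_integral_Ioc]
  refine norm_integral_le_of_norm_le ((hf'.mono_set Set.Ioc_subset_Icc_self).const_mul M) ?_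
  refine (ae_restrict_iff' measurableSet_Ioc).2 (Eventually.of_forall fun s hs => ?_)
  exact (S _).le_of_opNorm_le (hM _ ⟨by linarith [hs.2], by linarith [hs.1]⟩) _

/-- A bounded family of curves starting at `0` and approximately invariant under the compact
operators `S h`, `h > 0`, has a totally bounded set of values. -/
lemma totallyBounded_values
    (hScomp : ∀ t : ℝ, 0 < t → IsCompactOperator (S t))
    {Z : Set (ℝ → H)} {R : ℝ} (hZ0 : ∀ z ∈ Z, z 0 = 0)
    (hZR : ∀ z ∈ Z, ∀ t ∈ Set.Icc 0 T, ‖z t‖ ≤ R)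
    (hZ : ∀ η > 0, ∃ δ > 0, ∀ z ∈ Z, ∀ t h : ℝ, 0 ≤ t → 0 ≤ h → h ≤ δ → t + h ≤ T →
      ‖z (t + h) - S h (z t)‖ ≤ η) :
    TotallyBounded {x | ∃ z ∈ Z, ∃ t ∈ Set.Icc 0 T, z t = x} := by
  rw [Metric.totallyBounded_iff]
  intro ε hε
  obtain ⟨h, hh, hδ⟩ := hZ (ε / 2) (by positivity)
  have hc : TotallyBounded (S h '' Metric.closedBall 0 (max R 0)) :=
    totallyBounded_closure.1
      ((hScomp h hh).isCompact_closure_image_closedBall (f := (S h : H →ₗ[ℝ] H)) _).totallyBounded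
  obtain ⟨N, hN, hcov⟩ := Metric.totallyBounded_iff.1 hc (ε / 2) (by positivity)
  refine ⟨N, hN, ?_⟩
  -- The origin lies in `S h '' closedBall`, so both cases are covered by the same net.
  have key : ∀ x : H, ∀ w ∈ Metric.closedBall (0 : H) (max R 0), ‖x - S h w‖ ≤ ε / 2 →
      x ∈ ⋃ y ∈ N, Metric.ball y ε := by
    intro x w hw hx
    obtain ⟨y, hy, hyw⟩ := Set.mem_iUnion₂.1 (hcov ⟨w, hw, rfl⟩)
    refine Set.mem_iUnion₂.2 ⟨y, hy, ?_⟩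
    rw [Metric.mem_ball] at hyw ⊢
    have := dist_triangle x (S h w) y
    rw [← dist_eq_norm] at hx
    linarith
  rintro x ⟨z, hz, t, ht, rfl⟩
  rcases le_total h t with hle | hle
  · refine key _ (z (t - h)) ?_ ?_
    · rw [mem_closedBall_zero_iff]
      exact (hZR z hz _ ⟨by linarith, by linarith [ht.2]⟩).trans (le_max_left _ _)
    · simpa using hδ z hz (t - h) h (by linarith) hh.le le_rfl (by linarith [ht.2])
  · refine key _ 0 (by simp) ?_
    simpa [hZ0 z hz] using hδ z hz 0 t le_rfl ht.1 hle (by linarith [ht.2])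

/-- Strong convergence `S h → id` as `h → 0⁺` is uniform on totally bounded sets. -/
lemma uniform_strong_continuity
    (hS0 : S 0 = ContinuousLinearMap.id ℝ H)
    (hScont : ∀ x : H, ContinuousOn (fun t => S t x) (Set.Ici 0))
    (hM0 : 0 ≤ M) (hM : ∀ t ∈ Set.Icc 0 T, ‖S t‖ ≤ M)
    {K : Set H} (hK : TotallyBounded K) {ε : ℝ} (hε : 0 < ε) :
    ∃ δ > 0, ∀ h ∈ Set.Icc 0 T, h < δ → ∀ x ∈ K, ‖S h x - x‖ ≤ ε := by
  obtain ⟨N, hN, hcov⟩ := Metric.totallyBounded_iff.1 hK (ε / 2 / (M + 1)) (by positivity)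
  have hev : ∀ᶠ h in nhdsWithin (0:ℝ) (Set.Ici 0), ∀ y ∈ N, ‖S h y - y‖ < ε / 2 := by
    rw [eventually_all_finite hN]
    intro y _
    have h1 : Tendsto (fun t => S t y) (nhdsWithin 0 (Set.Ici 0)) (nhds y) := by
      simpa [ContinuousWithinAt, hS0] using hScont y 0 Set.self_mem_Ici
    simpa [dist_eq_norm] using Metric.tendsto_nhds.1 h1 (ε / 2) (by positivity)
  obtain ⟨δ, hδ, hb⟩ := Metric.mem_nhdsWithin_iff.1 hev
  refine ⟨δ, hδ, fun h hh hhδ x hx => ?_⟩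
  obtain ⟨y, hy, hxy⟩ := Set.mem_iUnion₂.1 (hcov hx)
  have h2 : ‖S h y - y‖ < ε / 2 :=
    hb (⟨by simpa [abs_of_nonneg hh.1] using hhδ, hh.1⟩ : h ∈ Metric.ball 0 δ ∩ Set.Ici 0) y hy
  rw [mem_ball_iff_norm] at hxy
  have h3 : ‖S h (x - y)‖ ≤ M * ‖x - y‖ := (S h).le_of_opNorm_le (hM h hh) _
  have h4 : (M + 1) * ‖x - y‖ ≤ ε / 2 := by
    rw [lt_div_iff₀ (by positivity)] at hxy
    linarith
  have h5 : S h x - x = S h (x - y) + (S h y - y) - (x - y) := by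
    rw [map_sub]; abel
  calc ‖S h x - x‖ ≤ ‖S h (x - y)‖ + ‖S h y - y‖ + ‖x - y‖ := by
        rw [h5]; exact (norm_sub_le _ _).trans (by gcongr; exact norm_add_le _ _)
    _ ≤ ε := by linarith

/-- Approximate invariance, together with total boundedness of the set of all values, makes the
family uniformly equicontinuous on `[0,T]`. -/
lemma equicontinuity_values
    (hS0 : S 0 = ContinuousLinearMap.id ℝ H)
    (hScont : ∀ x : H, ContinuousOn (fun t => S t x) (Set.Ici 0))
    (hM0 : 0 ≤ M) (hM : ∀ t ∈ Set.Icc 0 T, ‖S t‖ ≤ M)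
    {Z : Set (ℝ → H)}
    (hK : TotallyBounded {x | ∃ z ∈ Z, ∃ t ∈ Set.Icc 0 T, z t = x})
    (hZ : ∀ η > 0, ∃ δ > 0, ∀ z ∈ Z, ∀ t h : ℝ, 0 ≤ t → 0 ≤ h → h ≤ δ → t + h ≤ T →
      ‖z (t + h) - S h (z t)‖ ≤ η) {ε : ℝ} (hε : 0 < ε) :
    ∃ δ > 0, ∀ z ∈ Z, ∀ t ∈ Set.Icc 0 T, ∀ u ∈ Set.Icc 0 T, dist t u < δ →
      dist (z t) (z u) < ε := by
  obtain ⟨δ₁, hδ₁, h1⟩ := hZ (ε / 3) (by positivity)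
  obtain ⟨δ₂, hδ₂, h2⟩ :=
    uniform_strong_continuity hS0 hScont hM0 hM hK (show 0 < ε / 3 by positivity)
  refine ⟨min δ₁ δ₂, lt_min hδ₁ hδ₂, fun z hz => ?_⟩
  have main : ∀ t ∈ Set.Icc 0 T, ∀ u ∈ Set.Icc 0 T, t ≤ u → dist t u < min δ₁ δ₂ →
      dist (z t) (z u) < ε := by
    intro t ht u hu htu hd
    rw [dist_comm, Real.dist_eq, abs_of_nonneg (by linarith), lt_min_iff] at hd
    have a := h1 z hz t (u - t) ht.1 (by linarith) hd.1.le (by linarith [hu.2])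
    have b := h2 (u - t) ⟨by linarith, by linarith [hu.2, ht.1]⟩ hd.2 (z t) ⟨z, hz, t, ht, rfl⟩
    rw [add_sub_cancel] at a
    rw [← dist_eq_norm] at a b
    have := dist_triangle (z u) (S (u - t) (z t)) (z t)
    rw [dist_comm]
    linarith
  intro t ht u hu hd
  rcases le_total t u with h | h
  · exact main t ht u hu h hd
  · rw [dist_comm] at hd ⊢
    exact main u hu t ht h hd

end Helpers

/-- Let `S` be a strongly continuous semigroup of bounded operators on a separable Hilbert
space `H` such that `S t` is a compact operator for every `t > 0`, and let `𝒟` be a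
uniformly integrable family of Bochner-integrable functions `[0,T] → H`. Then the family
`𝒴 = { t ↦ ∫₀ᵗ S(t−s) f(s) ds : f ∈ 𝒟 }` consists of continuous functions and is
relatively compact in `C([0,T], H)` with the supremum distance. -/
theorem relatively_compact_convolution_semigroup
    {H : Type*} [NormedAddCommGroup H] [InnerProductSpace ℝ H] [CompleteSpace H]
    [SecondCountableTopology H]
    (S : ℝ → H →L[ℝ] H)
    (hS0 : S 0 = ContinuousLinearMap.id ℝ H)
    (hSsem : ∀ t s : ℝ, 0 ≤ t → 0 ≤ s → S (t + s) = (S t).comp (S s))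
    (hScont : ∀ x : H, ContinuousOn (fun t => S t x) (Set.Ici 0))
    (hScomp : ∀ t : ℝ, 0 < t → IsCompactOperator (S t))
    (T : ℝ) (hT : 0 < T)
    (𝒟 : Set (ℝ → H))
    (hInt : ∀ f ∈ 𝒟, IntegrableOn f (Set.Icc 0 T) volume)
    (hUI1 : ∃ B : ℝ, ∀ f ∈ 𝒟, (∫ s in Set.Icc (0:ℝ) T, ‖f s‖) ≤ B)
    (hUI2 : ∀ η : ℝ, 0 < η → ∃ δ : ℝ, 0 < δ ∧ ∀ f ∈ 𝒟,
      ∀ A : Set ℝ, A ⊆ Set.Icc 0 T → MeasurableSet A → volume A ≤ ENNReal.ofReal δ →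
        (∫ s in A, ‖f s‖) ≤ η) :
    (∀ f ∈ 𝒟, ∃ y : C(Set.Icc (0:ℝ) T, H),
      ∀ t : Set.Icc (0:ℝ) T, y t = ∫ s in Set.Icc 0 (t:ℝ), (S ((t:ℝ) - s)) (f s)) ∧
    IsCompact (closure {y : C(Set.Icc (0:ℝ) T, H) | ∃ f ∈ 𝒟,
      ∀ t : Set.Icc (0:ℝ) T, y t = ∫ s in Set.Icc 0 (t:ℝ), (S ((t:ℝ) - s)) (f s)}) := by
  obtain ⟨M, hM0, hM⟩ := exists_norm_bound hScont T
  obtain ⟨B, hB⟩ := hUI1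
  have hZ0 : ∀ z ∈ semigroupConv S '' 𝒟, z 0 = 0 := by
    rintro _ ⟨f, _, rfl⟩
    exact semigroupConv_zero f
  have hZR : ∀ z ∈ semigroupConv S '' 𝒟, ∀ t ∈ Set.Icc 0 T, ‖z t‖ ≤ M * B := by
    rintro _ ⟨f, hf, rfl⟩ t ht
    have h1 := norm_semigroupConv_sub_le hSsem hScont hM0 hM (hInt f hf) le_rfl ht.1
      (by linarith [ht.2])
    simp only [zero_add, semigroupConv_zero, map_zero, sub_zero] at h1
    have h2 : ∫ s in Set.Icc 0 t, ‖f s‖ ≤ ∫ s in Set.Icc 0 T, ‖f s‖ :=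
      setIntegral_mono_set (hInt f hf).norm (Eventually.of_forall fun s => norm_nonneg _)
        (Set.Icc_subset_Icc_right ht.2).eventuallyLE
    exact h1.trans (mul_le_mul_of_nonneg_left (h2.trans (hB f hf)) hM0)
  have hZ : ∀ η > 0, ∃ δ > 0, ∀ z ∈ semigroupConv S '' 𝒟, ∀ t h : ℝ, 0 ≤ t → 0 ≤ h → h ≤ δ →
      t + h ≤ T → ‖z (t + h) - S h (z t)‖ ≤ η := by
    intro η hη
    obtain ⟨δ, hδ, hA⟩ := hUI2 (η / (M + 1)) (by positivity)
    refine ⟨δ, hδ, ?_⟩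
    rintro _ ⟨f, hf, rfl⟩ t h ht hh hhδ hthT
    have h1 := norm_semigroupConv_sub_le hSsem hScont hM0 hM (hInt f hf) ht hh hthT
    have h2 := hA f hf (Set.Icc t (t + h)) (Set.Icc_subset_Icc ht hthT) measurableSet_Icc
      (by rw [Real.volume_Icc, add_sub_cancel_left]; exact ENNReal.ofReal_le_ofReal hhδ)
    have h3 : 0 ≤ ∫ s in Set.Icc t (t + h), ‖f s‖ := integral_nonneg fun s => norm_nonneg _
    rw [le_div_iff₀ (by positivity)] at h2
    linarith
  have hK := totallyBounded_values hScomp hZ0 hZR hZ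
  have hE := fun {ε : ℝ} (hε : 0 < ε) => equicontinuity_values hS0 hScont hM0 hM hK hZ hε
  refine ⟨fun f hf => ⟨⟨fun t => semigroupConv S f t, ?_⟩, fun t => rfl⟩, ?_⟩
  · refine Metric.continuous_iff.2 fun t ε hε => ?_
    obtain ⟨δ, hδ, h⟩ := hE hε
    exact ⟨δ, hδ, fun u hu => h _ ⟨f, hf, rfl⟩ u u.2 t t.2 hu⟩
  set Y : Set C(Set.Icc (0:ℝ) T, H) := {y | ∃ f ∈ 𝒟,
    ∀ t : Set.Icc (0:ℝ) T, y t = ∫ s in Set.Icc 0 (t:ℝ), (S ((t:ℝ) - s)) (f s)} with hY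
  let e := ContinuousMap.isometryEquivBoundedOfCompact (Set.Icc (0:ℝ) T) H
  -- Arzelà–Ascoli is available for bounded continuous functions; transfer along the isometry `e`.
  have hcomp : IsCompact (closure (e '' Y)) := by
    refine BoundedContinuousFunction.arzela_ascoli _
      (hK.closure.isCompact_of_isClosed isClosed_closure) _ ?_ ?_
    · rintro _ t ⟨y, ⟨f, hf, hy⟩, rfl⟩
      exact subset_closure ⟨_, ⟨f, hf, rfl⟩, t, t.2, (hy t).symm⟩
    · refine UniformEquicontinuous.equicontinuous (Metric.uniformEquicontinuous_iff.2 ?_)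
      intro ε hε
      obtain ⟨δ, hδ, h⟩ := hE hε
      refine ⟨δ, hδ, ?_⟩
      rintro t u htu ⟨_, y, ⟨f, hf, hy⟩, rfl⟩
      change dist (y t) (y u) < ε
      rw [hy t, hy u]
      exact h _ ⟨f, hf, rfl⟩ t t.2 u u.2 htu
  have himg : e '' closure Y = closure (e '' Y) := e.toHomeomorph.image_closure Y
  exact e.toHomeomorph.isCompact_image.1 (himg ▸ hcomp)
end

section
/- Let V and H be separable real Hilbert spaces and i : V → H a continuous linear injection with dense range, and let 𝒜 : V → V' (V' the continuous dual of V) be a bounded linear operator satisfying the coercivity condition: there exist α > 0 and λ₀ ≥ 0 such that 2·(𝒜u)(u) + λ₀·‖i u‖_H² ≥ α·‖u‖_V² for all u ∈ V. Let u₀ ∈ H, f₁ ∈ L²([0,T]; V') and f₂ ∈ L¹([0,T]; H). Then there exists a continuous function u : [0,T] → H and a Bochner-measurable function w : [0,T] → V with ∫₀ᵀ ‖w(s)‖_V² ds < ∞ and i(w(t)) = u(t) for almost every t, such that for every φ ∈ V and every t ∈ [0,T]: ⟨u(t), iφ⟩_H = ⟨u₀, iφ⟩_H − ∫₀ᵗ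 (𝒜 w(s))(φ) ds + ∫₀ᵗ f₁(s)(φ) ds + ∫₀ᵗ ⟨f₂(s), iφ⟩_H ds; moreover u is unique: any two pairs (u, w) and (u', w') satisfying these conditions have u = u' on [0,T]. -/
/-!
Identify `V'` with `V` by the Riesz isomorphism, and let `i†` be the adjoint of `i`; the equation
reads `i† i u' + A u = g + i† f`.

*Existence* needs neither Galerkin approximation nor an existence theorem for differential
equations. The pairs (initial value, right-hand side) of `C¹` functions `u : ℝ → V` are dense in
`H × L²(0,T;V)` (`exists_approx`), because a pair `(h, φ)` orthogonal to all of them vanishes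
(`adjoint_unique`): testing with `u' = exp (lam0 * t) • Φ`, where `Φ t = ∫ s in t..T, φ s`, and
moving the time integral in `A (∫ u') φ` onto `φ`, the orthogonality relation becomes
`∫ exp (lam0 * t) * (⟪i Φ, i φ⟫ + A Φ Φ) = 0`. The first term is half a total derivative up to a
multiple of `lam0 * ‖i Φ‖ ^ 2`, and coercivity forces `Φ = 0`. The classical energy estimate
(`exists_stability_const`) bounds `u` in `C([0,T];H)` and `L²(0,T;V)` by the data in
`H × L²(0,T;V) × L¹(0,T;H)`, so the solutions for approximating data converge, and the weak
formulation, being integrated in time, passes to the limit (`exists_weak_solution`).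

*Uniqueness* uses the time integral `W` of the difference `w` of two solutions rather than the
difference itself. It satisfies `⟪i w, i φ⟫ = - A W φ` almost everywhere, and `i W` is an absolutely
continuous function with derivative `i w`, so `φ = W` and Grönwall's inequality give `W = 0`
(`weak_solution_eq_zero`).

Total derivatives of bilinear expressions in primitives of integrable functions are handled by
Fubini's theorem on a triangle (`triangle_swap`, `symm_energy`).
-/

open MeasureTheory Filter
open scoped ENNReal RealInnerProductSpace

/-- `(u, w)` is a weak solution on `[0,T]` of
`u' + 𝒜 u = f₁ + f₂`, `u(0) = u₀`, in the Gelfand triple `V ⊂ H ⊂ V'` given by the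
embedding `i : V → H`: `u : [0,T] → H` is continuous, `w` is a `V`-valued representative
of `u` with `∫₀ᵀ ‖w‖_V² < ∞`, and the weak formulation holds for every test
function `φ ∈ V`. -/
def IsWeakSolution {V H : Type*}
    [NormedAddCommGroup V] [InnerProductSpace ℝ V]
    [NormedAddCommGroup H] [InnerProductSpace ℝ H]
    (i : V →L[ℝ] H) (A : V →L[ℝ] (V →L[ℝ] ℝ)) (T : ℝ)
    (u₀ : H) (f₁ : ℝ → (V →L[ℝ] ℝ)) (f₂ : ℝ → H)
    (u : ℝ → H) (w : ℝ → V) : Prop :=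
  ContinuousOn u (Set.Icc 0 T) ∧
  AEStronglyMeasurable w (volume.restrict (Set.Icc 0 T)) ∧
  (∫⁻ s in Set.Icc (0:ℝ) T, (‖w s‖₊ : ℝ≥0∞) ^ 2) < ⊤ ∧
  (∀ᵐ s ∂(volume.restrict (Set.Icc (0:ℝ) T)), i (w s) = u s) ∧
  ∀ φ : V, ∀ t ∈ Set.Icc (0:ℝ) T,
    ⟪u t, i φ⟫ = ⟪u₀, i φ⟫ - (∫ s in Set.Icc 0 t, A (w s) φ)
      + (∫ s in Set.Icc 0 t, f₁ s φ) + (∫ s in Set.Icc 0 t, ⟪f₂ s, i φ⟫)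

section

open Set
open scoped Interval

/-! ### Bilinear forms and primitives of integrable functions -/

theorem integrable_bilin {E F : Type*} [NormedAddCommGroup E] [NormedSpace ℝ E]
    [NormedAddCommGroup F] [NormedSpace ℝ F]
    (B : E →L[ℝ] F →L[ℝ] ℝ) {ν : Measure ℝ} {Φ : ℝ → E} {f : ℝ → F}
    (hΦ : AEStronglyMeasurable Φ ν) (c : ℝ) (hc : ∀ᵐ t ∂ν, ‖Φ t‖ ≤ c)
    (hf : Integrable f ν) : Integrable (fun t => B (Φ t) (f t)) ν := by
  refine (hf.norm.const_mul (‖B‖ * c)).mono' (B.aestronglyMeasurable_comp₂ hΦ hf.1) ?_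
  filter_upwards [hc] with t ht
  calc _ ≤ ‖B‖ * ‖Φ t‖ * ‖f t‖ := B.le_opNorm₂ _ _
    _ ≤ _ := by gcongr

theorem norm_intervalIntegral_le {E : Type*} [NormedAddCommGroup E] [NormedSpace ℝ E]
    {f : ℝ → E} (hf : Integrable f) (a b : ℝ) : ‖∫ s in a..b, f s‖ ≤ ∫ s, ‖f s‖ :=
  intervalIntegral.norm_integral_le_integral_norm_uIoc.trans
    (setIntegral_le_integral hf.norm (ae_of_all _ fun _ => norm_nonneg _))

theorem continuous_primitive_left {E : Type*} [NormedAddCommGroup E] [NormedSpace ℝ E]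
    [CompleteSpace E]
    {f : ℝ → E} (hf : Integrable f) (b : ℝ) : Continuous fun t => ∫ s in t..b, f s := by
  simp_rw [fun t => intervalIntegral.integral_symm (f := f) (μ := volume) b t]
  exact (intervalIntegral.continuous_primitive (fun _ _ => hf.intervalIntegrable) b).neg

/-- Fubini on the triangle `a ≤ s ≤ t ≤ b` for a bounded bilinear form. -/
theorem triangle_swap {E F : Type*} [NormedAddCommGroup E] [NormedSpace ℝ E] [CompleteSpace E]
    [NormedAddCommGroup F] [NormedSpace ℝ F] [CompleteSpace F]
    (B : E →L[ℝ] F →L[ℝ] ℝ) {a b : ℝ} (hab : a ≤ b) {f : ℝ → E} {g : ℝ → F}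
    (hf : IntegrableOn f (Ioc a b)) (hg : IntegrableOn g (Ioc a b)) :
    ∫ t in a..b, B (∫ s in a..t, f s) (g t) = ∫ s in a..b, B (f s) (∫ t in s..b, g t) := by
  set ν := (volume : Measure ℝ).restrict (Ioc a b) with hν
  have hB : Integrable (fun z : ℝ × ℝ => B (f z.1) (g z.2)) (ν.prod ν) :=
    Integrable.op_fst_snd (op := fun x y => B x y) (by fun_prop) ⟨‖B‖, B.le_opNorm₂⟩ hf hg
  have hK : Integrable (Function.uncurry fun s t : ℝ =>
      (if s ≤ t then B (f s) (g t) else 0)) (ν.prod ν) := by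
    have := hB.indicator (measurableSet_le measurable_fst measurable_snd)
    refine this.congr (ae_of_all _ fun z => ?_)
    simp [Function.uncurry, indicator]
  have hswap := integral_integral_swap hK
  rw [intervalIntegral.integral_of_le hab, intervalIntegral.integral_of_le hab]
  calc _ = ∫ t, ∫ s, (if s ≤ t then B (f s) (g t) else 0) ∂ν ∂ν := by
        refine setIntegral_congr_fun measurableSet_Ioc fun t ht => ?_
        have h1 : (fun s => if s ≤ t then B (f s) (g t) else 0) =
            (Iic t).indicator (fun s => (B.flip (g t)) (f s)) := by
          ext s; simp [indicator]
        simp only [h1]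
        rw [integral_indicator measurableSet_Iic, hν, Measure.restrict_restrict measurableSet_Iic,
          ContinuousLinearMap.integral_comp_comm _ (hf.mono_set (by grind)),
          intervalIntegral.integral_of_le ht.1.le]
        have : Iic t ∩ Ioc a b = Ioc a t := by
          ext x; simp only [mem_inter_iff, mem_Iic, mem_Ioc] at *; grind
        simp [this]
    _ = ∫ s, ∫ t, (if s ≤ t then B (f s) (g t) else 0) ∂ν ∂ν := hswap.symm
    _ = _ := by
        refine setIntegral_congr_fun measurableSet_Ioc fun s hs => ?_
        have h1 : (fun t => if s ≤ t then B (f s) (g t) else 0) =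
            (Ici s).indicator (fun t => (B (f s)) (g t)) := by
          ext t; simp [indicator]
        simp only [h1]
        rw [integral_indicator measurableSet_Ici, hν, Measure.restrict_restrict measurableSet_Ici,
          ContinuousLinearMap.integral_comp_comm _ (hg.mono_set (by grind)),
          intervalIntegral.integral_of_le hs.2]
        have : Ici s ∩ Ioc a b = Icc s b := by
          ext x; simp only [mem_inter_iff, mem_Ici, mem_Ioc, mem_Icc] at *; grind
        rw [this, integral_Icc_eq_integral_Ioc]

/-- The chain rule `2 ∫ B(U, f) = B(U, U)` for a primitive `U` of a merely integrable `f`, obtained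
from `triangle_swap` instead of almost everywhere differentiation. -/
theorem symm_energy {E : Type*} [NormedAddCommGroup E] [NormedSpace ℝ E] [CompleteSpace E]
    (B : E →L[ℝ] E →L[ℝ] ℝ) (hB : ∀ x y, B x y = B y x) {a b : ℝ} (hab : a ≤ b) {f : ℝ → E}
    (hf : IntegrableOn f (Ioc a b)) :
    2 * ∫ t in a..b, B (∫ s in a..t, f s) (f t) = B (∫ s in a..b, f s) (∫ s in a..b, f s) := by
  have h1 := triangle_swap B hab hf hf
  have hI : IntervalIntegrable f volume a b := (intervalIntegrable_iff_integrableOn_Ioc_of_le hab).2 hf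
  have hsub : ∀ t ∈ Icc a b, ∫ s in t..b, f s = (∫ s in a..b, f s) - ∫ s in a..t, f s := by
    intro t ht
    rw [eq_sub_iff_add_eq', intervalIntegral.integral_add_adjacent_intervals]
    · exact hI.mono_set (by grind [uIcc_of_le])
    · exact hI.mono_set (by grind [uIcc_of_le])
  have hc : ContinuousOn (fun t => ∫ s in a..t, f s) (uIcc a b) :=
    intervalIntegral.continuousOn_primitive_interval (by
      rw [uIcc_of_le hab]; exact (integrableOn_Icc_iff_integrableOn_Ioc (by simp)).2 hf)
  have hint : IntervalIntegrable (fun t => B (f t) (∫ s in a..t, f s)) volume a b := by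
    rw [intervalIntegrable_iff_integrableOn_Ioc_of_le hab]
    obtain ⟨c, hcb⟩ := isCompact_uIcc.exists_bound_of_continuousOn hc
    rw [uIcc_of_le hab] at hcb hc
    exact integrable_bilin B.flip
      ((hc.mono Ioc_subset_Icc_self).aestronglyMeasurable measurableSet_Ioc) c
      ((ae_restrict_mem measurableSet_Ioc).mono fun t ht => hcb t (Ioc_subset_Icc_self ht)) hf
  have h2 : ∫ s in a..b, B (f s) (∫ t in s..b, f t) =
      B (∫ s in a..b, f s) (∫ s in a..b, f s) - ∫ t in a..b, B (∫ s in a..t, f s) (f t) := by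
    calc _ = ∫ t in a..b, ((B.flip (∫ s in a..b, f s)) (f t) - B (f t) (∫ s in a..t, f s)) := by
          refine intervalIntegral.integral_congr fun t ht => ?_
          rw [uIcc_of_le hab] at ht
          simp [hsub t ht]
      _ = _ := by
          rw [intervalIntegral.integral_sub _ hint,
            ContinuousLinearMap.intervalIntegral_comp_comm _ hI]
          · simp [hB (f _)]
          · rw [intervalIntegrable_iff_integrableOn_Ioc_of_le hab]
            exact (B.flip _).integrable_comp hf
  linarith

/-- The variant of `symm_energy` for the backward primitive `∫ s in t..b, f s`. -/
theorem symm_energy_back {E : Type*} [NormedAddCommGroup E] [NormedSpace ℝ E] [CompleteSpace E]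
    (B : E →L[ℝ] E →L[ℝ] ℝ) (hB : ∀ x y, B x y = B y x) {a b : ℝ} (hab : a ≤ b) {f : ℝ → E}
    (hf : IntegrableOn f (Ioc a b)) :
    2 * ∫ t in a..b, B (∫ s in t..b, f s) (f t) = B (∫ s in a..b, f s) (∫ s in a..b, f s) := by
  rw [← symm_energy B hB hab hf, triangle_swap B hab hf hf]
  simp [hB (f _)]

/-- `symm_energy_back` with an exponential weight: integrating by parts against
`t ↦ exp (k * t)` produces the zeroth order term that absorbs `lam0` in the coercivity
condition. -/
theorem symm_energy_weighted {E : Type*} [NormedAddCommGroup E] [NormedSpace ℝ E] [CompleteSpace E]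
    (B : E →L[ℝ] E →L[ℝ] ℝ) (hB : ∀ x y, B x y = B y x) {T : ℝ} (hT : 0 ≤ T) {f : ℝ → E}
    (hf : Integrable f) (k : ℝ) :
    2 * ∫ t in (0:ℝ)..T, Real.exp (k * t) * B (∫ s in t..T, f s) (f t) =
      B (∫ s in (0:ℝ)..T, f s) (∫ s in (0:ℝ)..T, f s) +
      ∫ t in (0:ℝ)..T, k * Real.exp (k * t) * B (∫ s in t..T, f s) (∫ s in t..T, f s) := by
  set q : ℝ → ℝ := fun t => B (∫ s in t..T, f s) (f t) with hq
  have hq_int : Integrable q :=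
    integrable_bilin B (continuous_primitive_left hf T).aestronglyMeasurable (∫ s, ‖f s‖)
      (ae_of_all _ fun t => norm_intervalIntegral_le hf t T) hf
  have he : ∀ t : ℝ, Real.exp (k * t) = 1 + ∫ s in (0:ℝ)..t, k * Real.exp (k * s) := by
    intro t
    rw [intervalIntegral.integral_eq_sub_of_hasDerivAt (f := fun s => Real.exp (k * s))]
    · simp
    · intro s _
      have := ((hasDerivAt_id s).const_mul k).exp
      simpa [mul_comm] using this
    · exact Continuous.intervalIntegrable (by fun_prop) _ _
  have h1 := triangle_swap (ContinuousLinearMap.mul ℝ ℝ) hT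
    (f := fun s => k * Real.exp (k * s)) (g := q)
    (Continuous.integrableOn_Ioc (by fun_prop)) hq_int.integrableOn
  simp only [ContinuousLinearMap.mul_apply'] at h1
  have h2 : ∫ t in (0:ℝ)..T, Real.exp (k * t) * q t =
      (∫ t in (0:ℝ)..T, q t) + ∫ t in (0:ℝ)..T, (∫ s in (0:ℝ)..t, k * Real.exp (k * s)) * q t := by
    rw [← intervalIntegral.integral_add hq_int.intervalIntegrable]
    · refine intervalIntegral.integral_congr fun t _ => ?_
      simp only [he t]
      ring
    · refine hq_int.intervalIntegrable.continuousOn_mul ?_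
      have : (fun t => ∫ s in (0:ℝ)..t, k * Real.exp (k * s)) = fun t => Real.exp (k * t) - 1 := by
        ext t; rw [he t]; ring
      rw [this]
      fun_prop
  have h3 : ∀ t ∈ Icc 0 T, 2 * ∫ s in t..T, q s =
      B (∫ s in t..T, f s) (∫ s in t..T, f s) := fun t ht =>
    symm_energy_back B hB ht.2 hf.integrableOn
  rw [h2, h1, mul_add, h3 0 (by simp [hT]), ← intervalIntegral.integral_const_mul]
  congr 1
  refine intervalIntegral.integral_congr fun t ht => ?_
  rw [uIcc_of_le hT] at ht
  simp only [← h3 t ht]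
  ring

/-! ### Density of the data of classical solutions -/

/-- The orthogonal complement of the range of the problem map vanishes: if `(h, φ)` annihilates
all pairs `(i c, i† i ψ + A (c + ∫ ψ))` with `ψ` continuous, then `h = 0` and `φ = 0` almost
everywhere. Testing with `c = 0` and `ψ t = exp (lam0 * t) • ∫ s in t..T, φ s` turns coercivity
into `∫ s in t..T, φ s = 0` for all `t`. -/
theorem adjoint_unique {V H : Type*}
    [NormedAddCommGroup V] [InnerProductSpace ℝ V] [CompleteSpace V]
    [NormedAddCommGroup H] [InnerProductSpace ℝ H]
    (i : V →L[ℝ] H) (hdense : DenseRange i)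
    (A : V →L[ℝ] (V →L[ℝ] ℝ)) (α lam0 : ℝ) (hα : 0 < α)
    (hcoer : ∀ u : V, α * ‖u‖ ^ 2 ≤ 2 * A u u + lam0 * ‖i u‖ ^ 2)
    (T : ℝ) (hT : 0 < T) (h : H) (φ : ℝ → V) (hφ : Integrable φ)
    (hz : ∀ c : V, ∀ ψ : ℝ → V, Continuous ψ →
      ⟪i c, h⟫ + ∫ t in (0:ℝ)..T, (⟪i (ψ t), i (φ t)⟫ + A (c + ∫ s in (0:ℝ)..t, ψ s) (φ t)) = 0) :
    h = 0 ∧ ∀ᵐ t ∂(volume.restrict (Icc 0 T)), φ t = 0 := by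
  set B : V →L[ℝ] V →L[ℝ] ℝ := (innerSL ℝ).bilinearComp i i with hBdef
  have hBa : ∀ x y, B x y = ⟪i x, i y⟫ := fun x y => rfl
  have hBs : ∀ x y, B x y = B y x := fun x y => by simp [hBa, real_inner_comm]
  set Φ : ℝ → V := fun t => ∫ s in t..T, φ s with hΦ
  have hΦc : Continuous Φ := continuous_primitive_left hφ T
  -- test functions with `ψ = 0` relate `h` to `Φ 0`
  have hconst : ∀ c : V, ⟪i c, h⟫ + A c (Φ 0) = 0 := by
    intro c
    have := hz c (fun _ => 0) continuous_const
    simp only [map_zero, inner_zero_left, zero_add, intervalIntegral.integral_zero, add_zero] at this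
    rwa [ContinuousLinearMap.intervalIntegral_comp_comm _ hφ.intervalIntegrable] at this
  have hEc : Continuous fun t => Real.exp (lam0 * t) := by fun_prop
  set ψ : ℝ → V := fun t => Real.exp (lam0 * t) • Φ t with hψ
  have hψc : Continuous ψ := hEc.smul hΦc
  have hPc : Continuous fun t => ∫ s in (0:ℝ)..t, ψ s :=
    intervalIntegral.continuous_primitive (fun _ _ => hψc.intervalIntegrable _ _) 0
  have hbil : ∀ (C : V →L[ℝ] V →L[ℝ] ℝ) (F : ℝ → V), Continuous F →
      IntervalIntegrable (fun t => C (F t) (φ t)) volume 0 T := by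
    intro C F hF
    obtain ⟨c, hc⟩ := isCompact_Icc.exists_bound_of_continuousOn (s := Icc 0 T) hF.continuousOn
    rw [intervalIntegrable_iff_integrableOn_Ioc_of_le hT.le]
    exact integrable_bilin C hF.aestronglyMeasurable c
      ((ae_restrict_mem measurableSet_Ioc).mono fun t ht => hc t (Ioc_subset_Icc_self ht))
      hφ.integrableOn
  have hmain := hz 0 ψ hψc
  simp only [map_zero, inner_zero_left, zero_add, ← hBa] at hmain
  rw [intervalIntegral.integral_add (hbil B ψ hψc) (hbil A _ hPc),
    triangle_swap A hT.le hψc.integrableOn_Ioc hφ.integrableOn] at hmain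
  have hw := symm_energy_weighted B hBs hT.le hφ lam0
  have e1 : ∫ t in (0:ℝ)..T, B (ψ t) (φ t) =
      ∫ t in (0:ℝ)..T, Real.exp (lam0 * t) * B (Φ t) (φ t) := by
    refine intervalIntegral.integral_congr fun t _ => ?_
    simp [hψ]
  have e2 : ∫ t in (0:ℝ)..T, A (ψ t) (Φ t) =
      ∫ t in (0:ℝ)..T, Real.exp (lam0 * t) * A (Φ t) (Φ t) := by
    refine intervalIntegral.integral_congr fun t _ => ?_
    simp [hψ]
  have hmain2 : (∫ t in (0:ℝ)..T, Real.exp (lam0 * t) * B (Φ t) (φ t)) +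
    ∫ t in (0:ℝ)..T, Real.exp (lam0 * t) * A (Φ t) (Φ t) = 0 := by rw [← e1, ← e2]; exact hmain
  have hAc : Continuous fun t => A (Φ t) (Φ t) := by fun_prop
  have hBc : Continuous fun t => B (Φ t) (Φ t) := by fun_prop
  have hle : ∫ t in (0:ℝ)..T, Real.exp (lam0 * t) * (α * ‖Φ t‖ ^ 2) ≤
      ∫ t in (0:ℝ)..T, (lam0 * Real.exp (lam0 * t) * B (Φ t) (Φ t) +
        2 * (Real.exp (lam0 * t) * A (Φ t) (Φ t))) := by
    refine intervalIntegral.integral_mono_on hT.le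
      (Continuous.intervalIntegrable (by fun_prop) _ _)
      (Continuous.intervalIntegrable (by fun_prop) _ _) fun t _ => ?_
    have := mul_le_mul_of_nonneg_left (hcoer (Φ t)) (Real.exp_pos (lam0 * t)).le
    rw [hBa, real_inner_self_eq_norm_sq]
    linarith
  rw [intervalIntegral.integral_add (Continuous.intervalIntegrable (by fun_prop) _ _)
    (Continuous.intervalIntegrable (by fun_prop) _ _), intervalIntegral.integral_const_mul] at hle
  have hB0 : 0 ≤ B (∫ s in (0:ℝ)..T, φ s) (∫ s in (0:ℝ)..T, φ s) := by
    rw [hBa]; exact real_inner_self_nonneg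
  have hΦ0 : ∀ t ∈ Icc 0 T, Φ t = 0 := by
    by_contra! hne
    obtain ⟨t, ht, hne⟩ := hne
    have : 0 < ∫ t in (0:ℝ)..T, Real.exp (lam0 * t) * (α * ‖Φ t‖ ^ 2) :=
      intervalIntegral.integral_pos hT (Continuous.continuousOn (by fun_prop))
        (fun x _ => by positivity) ⟨t, ht, by positivity⟩
    linarith
  constructor
  · refine hdense.eq_zero_of_inner_right ℝ fun c => ?_
    have := hconst c
    rwa [hΦ0 0 (by simp [hT.le]), map_zero, add_zero] at this
  · have hd := LocallyIntegrable.ae_hasDerivAt_integral hφ.locallyIntegrable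
    rw [← Measure.restrict_congr_set (Ioo_ae_eq_Icc (a := (0:ℝ)) (b := T)), ae_restrict_iff' measurableSet_Ioo]
    filter_upwards [hd] with x hx hxI
    have h1 := hx 0
    have h2 : HasDerivAt (fun x => ∫ t in (0:ℝ)..x, φ t) 0 x := by
      refine (hasDerivAt_const x (0:V)).congr_of_eventuallyEq ?_
      -- `∫ s in 0..T, φ s` and `∫ s in y..T, φ s` both vanish, hence so does their difference
      filter_upwards [Ioo_mem_nhds hxI.1 hxI.2] with y hy
      have e := intervalIntegral.integral_add_adjacent_intervals
        (hφ.intervalIntegrable (a := 0) (b := y)) (hφ.intervalIntegrable (a := y) (b := T))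
      have e0 := hΦ0 0 (by simp [hT.le])
      have ey := hΦ0 y (Ioo_subset_Icc_self hy)
      simp only [hΦ] at e0 ey
      rw [e0, ey, add_zero] at e
      exact e
    exact h1.unique h2

/-- The pairs (initial value in `H`, right-hand side in `L²(0,T;V)`) arising from `C¹` functions
`t ↦ c + ∫ s in 0..t, ψ s` are dense in `H × L²(0,T;V)`. Here `V'` is identified with `V` by the
Riesz isomorphism, so `P` represents the functional `i† i ψ + A u`. -/
theorem exists_approx {V H : Type*}
    [NormedAddCommGroup V] [InnerProductSpace ℝ V] [CompleteSpace V]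
    [NormedAddCommGroup H] [InnerProductSpace ℝ H] [CompleteSpace H]
    (i : V →L[ℝ] H) (hdense : DenseRange i)
    (A : V →L[ℝ] (V →L[ℝ] ℝ)) (α lam0 : ℝ) (hα : 0 < α)
    (hcoer : ∀ u : V, α * ‖u‖ ^ 2 ≤ 2 * A u u + lam0 * ‖i u‖ ^ 2)
    (T : ℝ) (hT : 0 < T) (x : H) (g : ℝ → V) (hg : MemLp g 2 (volume.restrict (Icc 0 T)))
    (δ : ℝ) (hδ : 0 < δ) :
    ∃ (c : V) (ψ : ℝ → V) (P : ℝ → V), Continuous ψ ∧ Continuous P ∧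
      (∀ t v, ⟪P t, v⟫ = ⟪i (ψ t), i v⟫ + A (c + ∫ s in (0:ℝ)..t, ψ s) v) ∧
      ‖i c - x‖ ≤ δ ∧ eLpNorm (P - g) 2 (volume.restrict (Icc 0 T)) ≤ ENNReal.ofReal δ := by
  set μ := (volume : Measure ℝ).restrict (Icc 0 T) with hμ
  set B : V →L[ℝ] V →L[ℝ] ℝ := (innerSL ℝ).bilinearComp i i with hBdef
  have hBa : ∀ x y, B x y = ⟪i x, i y⟫ := fun x y => rfl
  set Pf : V → (ℝ → V) → ℝ → V := fun c ψ t =>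
    (InnerProductSpace.toDual ℝ V).symm (B (ψ t) + A (c + ∫ s in (0:ℝ)..t, ψ s)) with hPf
  have hPin : ∀ c ψ t v, ⟪Pf c ψ t, v⟫ = ⟪i (ψ t), i v⟫ + A (c + ∫ s in (0:ℝ)..t, ψ s) v := by
    intro c ψ t v
    simp only [hPf, InnerProductSpace.toDual_symm_apply]
    simp [hBa]
  have hPc : ∀ c ψ, Continuous ψ → Continuous (Pf c ψ) := by
    intro c ψ hψ
    have : Continuous fun t => ∫ s in (0:ℝ)..t, ψ s :=
      intervalIntegral.continuous_primitive (fun _ _ => hψ.intervalIntegrable _ _) 0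
    refine (InnerProductSpace.toDual ℝ V).symm.continuous.comp ?_
    fun_prop
  have hPm : ∀ c ψ, Continuous ψ → MemLp (Pf c ψ) 2 μ := by
    intro c ψ hψ
    obtain ⟨C, hC⟩ := isCompact_Icc.exists_bound_of_continuousOn (s := Icc 0 T)
      (hPc c ψ hψ).continuousOn
    exact MemLp.of_bound (hPc c ψ hψ).aestronglyMeasurable C
      ((ae_restrict_mem measurableSet_Icc).mono hC)
  -- the range of the map `(c, ψ) ↦ (i c, Pf c ψ)`
  let S : Submodule ℝ (WithLp 2 (H × Lp V 2 μ)) :=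
    { carrier := {p | ∃ c ψ, Continuous ψ ∧ p.fst = i c ∧ p.snd =ᵐ[μ] Pf c ψ}
      zero_mem' := by
        refine ⟨0, 0, continuous_const, by simp, ?_⟩
        filter_upwards [Lp.coeFn_zero V 2 μ] with t ht
        simpa [hPf] using ht
      add_mem' := by
        rintro p q ⟨c, ψ, hψ, h1, h2⟩ ⟨c', ψ', hψ', h1', h2'⟩
        refine ⟨c + c', ψ + ψ', hψ.add hψ', by simp [h1, h1'], ?_⟩
        filter_upwards [h2, h2', Lp.coeFn_add p.snd q.snd] with t e e' ea
        rw [WithLp.add_snd, ea, Pi.add_apply, e, e']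
        simp only [hPf, Pi.add_apply]
        rw [intervalIntegral.integral_add (hψ.intervalIntegrable _ _) (hψ'.intervalIntegrable _ _),
          ← map_add]
        congr 1
        simp only [map_add]
        abel
      smul_mem' := by
        rintro r p ⟨c, ψ, hψ, h1, h2⟩
        refine ⟨r • c, r • ψ, hψ.const_smul r, by simp [h1], ?_⟩
        filter_upwards [h2, Lp.coeFn_smul r p.snd] with t e ea
        rw [WithLp.smul_snd, ea, Pi.smul_apply, e]
        simp only [hPf, Pi.smul_apply]
        rw [intervalIntegral.integral_smul, ← smul_add, map_smul, map_smul, ← smul_add,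
          LinearIsometryEquiv.map_smulₛₗ]
        simp }
  have hS : S.topologicalClosure = ⊤ := by
    rw [Submodule.topologicalClosure_eq_top_iff, Submodule.eq_bot_iff]
    intro p hp
    rw [Submodule.mem_orthogonal] at hp
    have hpi : IntegrableOn (p.snd : ℝ → V) (Icc 0 T) :=
      (Lp.memLp p.snd).integrable (by norm_num)
    set φ : ℝ → V := (Icc 0 T).indicator (p.snd : ℝ → V) with hφ
    have hφi : Integrable φ := (integrable_indicator_iff measurableSet_Icc).2 hpi
    obtain ⟨r1, r2⟩ := adjoint_unique i hdense A α lam0 hα hcoer T hT p.fst φ hφi (by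
      intro c ψ hψ
      have := hp (WithLp.toLp 2 (i c, (hPm c ψ hψ).toLp)) ⟨c, ψ, hψ, rfl, (hPm c ψ hψ).coeFn_toLp⟩
      rw [WithLp.prod_inner_apply, L2.inner_def] at this
      refine Eq.trans (congrArg (⟪i c, p.fst⟫ + ·) ?_) this
      rw [intervalIntegral.integral_of_le hT.le, ← integral_Icc_eq_integral_Ioc]
      refine integral_congr_ae ?_
      filter_upwards [(hPm c ψ hψ).coeFn_toLp, ae_restrict_mem measurableSet_Icc] with t ht htI
      simp only [ht, hPin, hφ, indicator_of_mem htI]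
      rfl)
    have : p.snd = 0 := by
      rw [Lp.eq_zero_iff_ae_eq_zero]
      filter_upwards [r2, ae_restrict_mem measurableSet_Icc] with t ht htI
      simpa [hφ, indicator_of_mem htI] using ht
    exact (WithLp.ofLp_injective 2) (Prod.ext r1 this)
  have hmem : WithLp.toLp 2 (x, hg.toLp) ∈ closure (S : Set (WithLp 2 (H × Lp V 2 μ))) := by
    rw [← Submodule.topologicalClosure_coe, hS]; trivial
  obtain ⟨p, ⟨c, ψ, hψ, h1, h2⟩, hd⟩ := Metric.mem_closure_iff.1 hmem δ hδ
  have hn := WithLp.prod_norm_sq_eq_of_L2 (p - WithLp.toLp 2 (x, hg.toLp))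
  rw [dist_comm, dist_eq_norm] at hd
  have hd2 : ‖p - WithLp.toLp 2 (x, hg.toLp)‖ ^ 2 ≤ δ ^ 2 := by gcongr
  refine ⟨c, ψ, Pf c ψ, hψ, hPc c ψ hψ, hPin c ψ, ?_, ?_⟩
  · rw [← h1]
    refine abs_le_of_sq_le_sq' ?_ hδ.le |>.2
    refine le_trans ?_ hd2
    rw [hn]
    have : 0 ≤ ‖(p - WithLp.toLp 2 (x, hg.toLp)).snd‖ ^ 2 := by positivity
    exact le_add_of_nonneg_right this
  · have hs : ‖p.snd - hg.toLp‖ ≤ δ := by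
      refine abs_le_of_sq_le_sq' ?_ hδ.le |>.2
      refine le_trans ?_ hd2
      rw [hn]
      have : 0 ≤ ‖(p - WithLp.toLp 2 (x, hg.toLp)).fst‖ ^ 2 := by positivity
      exact le_add_of_nonneg_left this
    have e : eLpNorm (Pf c ψ - g) 2 μ = ‖p.snd - hg.toLp‖ₑ := by
      rw [Lp.enorm_def]
      refine eLpNorm_congr_ae ?_
      filter_upwards [h2, hg.coeFn_toLp, Lp.coeFn_sub p.snd hg.toLp] with t e1 e2 e3
      rw [e3, Pi.sub_apply, Pi.sub_apply, e1, e2]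
    rw [e, ← ofReal_norm]
    exact ENNReal.ofReal_le_ofReal hs

/-! ### Classical solutions and the energy estimate -/

/-- `u : ℝ → V` is a `C¹` solution of `i† i u' + A u = F + i† G` on the whole line, with continuous
data `F` (a functional on `V`, represented by a vector of `V` through the Riesz isomorphism) and
`G` (with values in `H`). -/
def IsClassicalSolution {V H : Type*} [NormedAddCommGroup V] [InnerProductSpace ℝ V]
    [NormedAddCommGroup H] [InnerProductSpace ℝ H]
    (i : V →L[ℝ] H) (A : V →L[ℝ] (V →L[ℝ] ℝ)) (u F : ℝ → V) (G : ℝ → H) : Prop :=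
  Continuous F ∧ Continuous G ∧ ∃ ψ : ℝ → V, Continuous ψ ∧ (∀ t, HasDerivAt u (ψ t) t) ∧
    ∀ t v, ⟪i (ψ t), i v⟫ + A (u t) v = ⟪F t, v⟫ + ⟪G t, i v⟫

theorem IsClassicalSolution.sub {V H : Type*} [NormedAddCommGroup V] [InnerProductSpace ℝ V]
    [NormedAddCommGroup H] [InnerProductSpace ℝ H]
    {i : V →L[ℝ] H} {A : V →L[ℝ] (V →L[ℝ] ℝ)} {u F u' F' : ℝ → V} {G G' : ℝ → H}
    (h : IsClassicalSolution i A u F G) (h' : IsClassicalSolution i A u' F' G') :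
    IsClassicalSolution i A (u - u') (F - F') (G - G') := by
  obtain ⟨hF, hG, ψ, hψ, hd, he⟩ := h
  obtain ⟨hF', hG', ψ', hψ', hd', he'⟩ := h'
  refine ⟨hF.sub hF', hG.sub hG', ψ - ψ', hψ.sub hψ', fun t => (hd t).sub (hd' t), fun t v => ?_⟩
  have h1 := he t v
  have h2 := he' t v
  simp only [Pi.sub_apply, map_sub, inner_sub_left, sub_apply]
  linarith

theorem IsClassicalSolution.continuous {V H : Type*} [NormedAddCommGroup V] [InnerProductSpace ℝ V]
    [NormedAddCommGroup H] [InnerProductSpace ℝ H]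
    {i : V →L[ℝ] H} {A : V →L[ℝ] (V →L[ℝ] ℝ)} {u F : ℝ → V} {G : ℝ → H}
    (h : IsClassicalSolution i A u F G) : Continuous u := by
  obtain ⟨-, -, ψ, -, hd, -⟩ := h
  exact continuous_iff_continuousAt.2 fun t => (hd t).continuousAt

/-- A classical solution satisfies the weak formulation; the time integrals are taken of the
vector-valued functions, which is the form in which limits are taken. -/
theorem IsClassicalSolution.integrated {V H : Type*}
    [NormedAddCommGroup V] [InnerProductSpace ℝ V] [CompleteSpace V]
    [NormedAddCommGroup H] [InnerProductSpace ℝ H] [CompleteSpace H]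
    {i : V →L[ℝ] H} {A : V →L[ℝ] (V →L[ℝ] ℝ)} {u F : ℝ → V} {G : ℝ → H}
    (h : IsClassicalSolution i A u F G) (v : V) {t : ℝ} (ht : 0 ≤ t) :
    ⟪i (u t), i v⟫ = ⟪i (u 0), i v⟫ - A (∫ s in Icc 0 t, u s) v
      + ⟪∫ s in Icc 0 t, F s, v⟫ + ⟪∫ s in Icc 0 t, G s, i v⟫ := by
  have hu := h.continuous
  obtain ⟨hF, hG, ψ, hψ, hd, he⟩ := h
  have hder : ∀ s ∈ uIcc 0 t, HasDerivAt (fun s => ⟪i (u s), i v⟫)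
      (- A (u s) v + ⟪F s, v⟫ + ⟪G s, i v⟫) s := by
    intro s _
    have h1 : HasDerivAt (fun s => ⟪i v, i (u s)⟫) ⟪i v, i (ψ s)⟫ s :=
      ((innerSL ℝ (i v)).comp i).hasFDerivAt.comp_hasDerivAt s (hd s)
    have h2 := he s v
    convert h1 using 1
    · ext s; rw [real_inner_comm]
    · rw [real_inner_comm (i (ψ s)) (i v)]; linarith
  have := intervalIntegral.integral_eq_sub_of_hasDerivAt hder
    (Continuous.intervalIntegrable (by fun_prop) _ _)
  rw [intervalIntegral.integral_add (Continuous.intervalIntegrable (by fun_prop) _ _)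
    (Continuous.intervalIntegrable (by fun_prop) _ _),
    intervalIntegral.integral_add (Continuous.intervalIntegrable (by fun_prop) _ _)
    (Continuous.intervalIntegrable (by fun_prop) _ _), intervalIntegral.integral_neg] at this
  have e1 : A (∫ s in (0:ℝ)..t, u s) v = ∫ s in (0:ℝ)..t, A (u s) v :=
    ((A.flip v).intervalIntegral_comp_comm (hu.intervalIntegrable _ _)).symm
  have e2 : ⟪∫ s in (0:ℝ)..t, F s, v⟫ = ∫ s in (0:ℝ)..t, ⟪F s, v⟫ :=
    (((innerSL ℝ).flip v).intervalIntegral_comp_comm (hF.intervalIntegrable _ _)).symm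
  have e3 : ⟪∫ s in (0:ℝ)..t, G s, i v⟫ = ∫ s in (0:ℝ)..t, ⟪G s, i v⟫ :=
    (((innerSL ℝ).flip (i v)).intervalIntegral_comp_comm (hG.intervalIntegrable _ _)).symm
  simp only [integral_Icc_eq_integral_Ioc, ← intervalIntegral.integral_of_le ht]
  rw [e1, e2, e3]
  linarith

/-- The energy estimate, with `M` a bound for `‖i (u t)‖` on `[0,T]` that controls the `L¹` term. -/
theorem IsClassicalSolution.energy {V H : Type*}
    [NormedAddCommGroup V] [InnerProductSpace ℝ V]
    [NormedAddCommGroup H] [InnerProductSpace ℝ H]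
    {i : V →L[ℝ] H} {A : V →L[ℝ] (V →L[ℝ] ℝ)} {α lam0 : ℝ} (hα : 0 < α) (hlam0 : 0 ≤ lam0)
    (hcoer : ∀ u : V, α * ‖u‖ ^ 2 ≤ 2 * A u u + lam0 * ‖i u‖ ^ 2) {u F : ℝ → V} {G : ℝ → H}
    (h : IsClassicalSolution i A u F G) {T : ℝ} (M : ℝ)
    (hM : ∀ t ∈ Icc 0 T, ‖i (u t)‖ ≤ M) {t : ℝ} (ht : t ∈ Icc 0 T) :
    ‖i (u t)‖ ^ 2 + α / 2 * ∫ s in (0:ℝ)..t, ‖u s‖ ^ 2 ≤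
      Real.exp (lam0 * T) * (‖i (u 0)‖ ^ 2 + 2 / α * (∫ s in (0:ℝ)..T, ‖F s‖ ^ 2)
        + 2 * M * ∫ s in (0:ℝ)..T, ‖G s‖) := by
  have hu := h.continuous
  obtain ⟨hF, hG, ψ, hψ, hd, he⟩ := h
  have hM0 : 0 ≤ M := (norm_nonneg _).trans (hM t ht)
  set r : ℝ → ℝ := fun s => Real.exp (-lam0 * s) * (α / 2 * ‖u s‖ ^ 2) - 2 / α * ‖F s‖ ^ 2
    - 2 * M * ‖G s‖ with hr
  have hrc : Continuous r := by fun_prop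
  set X : ℝ → ℝ := fun t => Real.exp (-lam0 * t) * ‖i (u t)‖ ^ 2 + ∫ s in (0:ℝ)..t, r s with hX
  have hXd : ∀ s, HasDerivAt X (Real.exp (-lam0 * s) * (-lam0) * ‖i (u s)‖ ^ 2 +
      Real.exp (-lam0 * s) * (2 * ⟪i (u s), i (ψ s)⟫) + r s) s := by
    intro s
    have h1 : HasDerivAt (fun s => i (u s)) (i (ψ s)) s := i.hasFDerivAt.comp_hasDerivAt s (hd s)
    have h2 := h1.norm_sq
    have h3 : HasDerivAt (fun s => Real.exp (-lam0 * s)) (Real.exp (-lam0 * s) * (-lam0)) s := by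
      simpa using ((hasDerivAt_id s).const_mul (-lam0)).exp
    exact (h3.mul h2).add (intervalIntegral.integral_hasDerivAt_right (hrc.intervalIntegrable _ _)
      (hrc.stronglyMeasurableAtFilter _ _) hrc.continuousAt)
  have hXc : Continuous X := continuous_iff_continuousAt.2 fun s => (hXd s).continuousAt
  -- testing the equation with `u s` itself shows that the weighted energy `X` does not increase
  have hanti : AntitoneOn X (Icc 0 T) := by
    refine antitoneOn_of_deriv_nonpos (convex_Icc 0 T) hXc.continuousOn
      (fun s _ => (hXd s).differentiableAt.differentiableWithinAt) fun s hs => ?_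
    rw [interior_Icc] at hs
    have hsI := Ioo_subset_Icc_self hs
    rw [(hXd s).deriv]
    have e0 := he s (u s)
    have e1 := hcoer (u s)
    have e2 : ⟪F s, u s⟫ ≤ ‖F s‖ * ‖u s‖ := real_inner_le_norm _ _
    have e3 : ⟪G s, i (u s)⟫ ≤ ‖G s‖ * M :=
      (real_inner_le_norm _ _).trans (by gcongr; exact hM s hsI)
    rw [real_inner_comm] at e0
    have e4 : 2 * (‖F s‖ * ‖u s‖) ≤ 2 / α * ‖F s‖ ^ 2 + α / 2 * ‖u s‖ ^ 2 := by
      have : 0 ≤ (2 / α) * (‖F s‖ - α / 2 * ‖u s‖) ^ 2 := by positivity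
      have e : (2 / α) * (‖F s‖ - α / 2 * ‖u s‖) ^ 2 =
          2 / α * ‖F s‖ ^ 2 + α / 2 * ‖u s‖ ^ 2 - 2 * (‖F s‖ * ‖u s‖) := by
        field_simp; ring
      linarith
    have e5 : 2 * ⟪i (u s), i (ψ s)⟫ - lam0 * ‖i (u s)‖ ^ 2 + α / 2 * ‖u s‖ ^ 2 ≤
        2 / α * ‖F s‖ ^ 2 + 2 * M * ‖G s‖ := by linarith
    have hexp : Real.exp (-lam0 * s) ≤ 1 := by
      rw [Real.exp_le_one_iff]; nlinarith [hs.1]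
    have e6 := mul_le_mul_of_nonneg_left e5 (Real.exp_pos (-lam0 * s)).le
    have e7 : Real.exp (-lam0 * s) * (2 / α * ‖F s‖ ^ 2 + 2 * M * ‖G s‖) ≤
        1 * (2 / α * ‖F s‖ ^ 2 + 2 * M * ‖G s‖) := by gcongr
    simp only [hr]
    linarith
  have hT0 : 0 ≤ T := ht.1.trans ht.2
  have hle := hanti (left_mem_Icc.2 hT0) ht ht.1
  have ii : ∀ {f : ℝ → ℝ}, Continuous f → IntervalIntegrable f volume 0 t :=
    fun hf => hf.intervalIntegrable _ _
  have hXt : X t = Real.exp (-lam0 * t) * ‖i (u t)‖ ^ 2 +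
      ((∫ s in (0:ℝ)..t, Real.exp (-lam0 * s) * (α / 2 * ‖u s‖ ^ 2))
        - 2 / α * (∫ s in (0:ℝ)..t, ‖F s‖ ^ 2) - 2 * M * ∫ s in (0:ℝ)..t, ‖G s‖) := by
    simp only [hX, hr]
    rw [intervalIntegral.integral_sub (ii (by fun_prop)) (ii (by fun_prop)),
      intervalIntegral.integral_sub (ii (by fun_prop)) (ii (by fun_prop)),
      intervalIntegral.integral_const_mul, intervalIntegral.integral_const_mul]
  have hX0 : X 0 = ‖i (u 0)‖ ^ 2 := by simp [hX]
  have hmono : ∀ f : ℝ → ℝ, Continuous f → (∀ s, 0 ≤ f s) →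
      ∫ s in (0:ℝ)..t, f s ≤ ∫ s in (0:ℝ)..T, f s := fun f hf h0 =>
    intervalIntegral.integral_mono_interval le_rfl ht.1 ht.2 (ae_of_all _ h0)
      (hf.intervalIntegrable _ _)
  have hF1 := hmono (fun s => ‖F s‖ ^ 2) (by fun_prop) (fun s => by positivity)
  have hG1 := hmono (fun s => ‖G s‖) (by fun_prop) (fun s => by positivity)
  have hexpT : ∀ s ∈ Icc 0 t, Real.exp (-lam0 * T) ≤ Real.exp (-lam0 * s) := fun s hs =>
    Real.exp_le_exp.2 (by nlinarith [hs.1, hs.2, ht.2])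
  have hlow : Real.exp (-lam0 * T) * (α / 2 * ∫ s in (0:ℝ)..t, ‖u s‖ ^ 2) ≤
      ∫ s in (0:ℝ)..t, Real.exp (-lam0 * s) * (α / 2 * ‖u s‖ ^ 2) := by
    rw [← intervalIntegral.integral_const_mul, ← intervalIntegral.integral_const_mul]
    refine intervalIntegral.integral_mono_on ht.1 (ii (by fun_prop)) (ii (by fun_prop))
      fun s hs => ?_
    have := hexpT s hs
    gcongr
  have hlow2 : Real.exp (-lam0 * T) * ‖i (u t)‖ ^ 2 ≤ Real.exp (-lam0 * t) * ‖i (u t)‖ ^ 2 := by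
    have := hexpT t (right_mem_Icc.2 ht.1)
    gcongr
  have hfin : Real.exp (-lam0 * T) * (‖i (u t)‖ ^ 2 + α / 2 * ∫ s in (0:ℝ)..t, ‖u s‖ ^ 2) ≤
      ‖i (u 0)‖ ^ 2 + 2 / α * (∫ s in (0:ℝ)..T, ‖F s‖ ^ 2) + 2 * M * ∫ s in (0:ℝ)..T, ‖G s‖ := by
    have hF2 : 2 / α * (∫ s in (0:ℝ)..t, ‖F s‖ ^ 2) ≤ 2 / α * (∫ s in (0:ℝ)..T, ‖F s‖ ^ 2) := by
      gcongr
    have hG2 : 2 * M * (∫ s in (0:ℝ)..t, ‖G s‖) ≤ 2 * M * (∫ s in (0:ℝ)..T, ‖G s‖) := by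
      gcongr
    linarith
  have := mul_le_mul_of_nonneg_left hfin (Real.exp_pos (lam0 * T)).le
  rwa [← mul_assoc, ← Real.exp_add, neg_mul, add_neg_cancel, Real.exp_zero, one_mul] at this

/-- Linear stability: the `C([0,T];H)` and `L²(0,T;V)` norms of a classical solution are bounded by
the sizes of the initial value in `H`, of `F` in `L²` and of `G` in `L¹`. -/
theorem exists_stability_const {V H : Type*}
    [NormedAddCommGroup V] [InnerProductSpace ℝ V]
    [NormedAddCommGroup H] [InnerProductSpace ℝ H]
    (i : V →L[ℝ] H) (A : V →L[ℝ] (V →L[ℝ] ℝ)) (α lam0 : ℝ) (hα : 0 < α) (hlam0 : 0 ≤ lam0)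
    (hcoer : ∀ u : V, α * ‖u‖ ^ 2 ≤ 2 * A u u + lam0 * ‖i u‖ ^ 2) (T : ℝ) (hT : 0 < T) :
    ∃ C : ℝ, 0 ≤ C ∧ ∀ (u F : ℝ → V) (G : ℝ → H) (δ : ℝ), IsClassicalSolution i A u F G → 0 ≤ δ →
      ‖i (u 0)‖ ≤ δ → eLpNorm F 2 (volume.restrict (Icc 0 T)) ≤ ENNReal.ofReal δ →
      eLpNorm G 1 (volume.restrict (Icc 0 T)) ≤ ENNReal.ofReal δ →
      (∀ t ∈ Icc 0 T, ‖i (u t)‖ ≤ C * δ) ∧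
      eLpNorm u 2 (volume.restrict (Icc 0 T)) ≤ ENNReal.ofReal (C * δ) := by
  have e2 : ∀ f : ℝ → V, Continuous f → eLpNorm f 2 (volume.restrict (Icc 0 T)) =
      ENNReal.ofReal (√(∫ s in (0:ℝ)..T, ‖f s‖ ^ 2)) := by
    intro f hf
    have hm : MemLp f 2 (volume.restrict (Icc 0 T)) := by
      obtain ⟨C, hC⟩ := isCompact_Icc.exists_bound_of_continuousOn (s := Icc 0 T) hf.continuousOn
      exact MemLp.of_bound hf.aestronglyMeasurable C ((ae_restrict_mem measurableSet_Icc).mono hC)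
    rw [hm.eLpNorm_eq_integral_rpow_norm (by norm_num) (by norm_num),
      intervalIntegral.integral_of_le hT.le, ← integral_Icc_eq_integral_Ioc, Real.sqrt_eq_rpow]
    norm_num
  have e1 : ∀ f : ℝ → H, Continuous f → eLpNorm f 1 (volume.restrict (Icc 0 T)) =
      ENNReal.ofReal (∫ s in (0:ℝ)..T, ‖f s‖) := by
    intro f hf
    have hm : Integrable f (volume.restrict (Icc 0 T)) := hf.integrableOn_Icc
    rw [eLpNorm_one_eq_lintegral_enorm, ← ofReal_integral_norm_eq_lintegral_enorm hm,
      intervalIntegral.integral_of_le hT.le, ← integral_Icc_eq_integral_Ioc]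
  set K := Real.exp (lam0 * T) with hK
  have hK1 : 1 ≤ K := Real.one_le_exp (by positivity)
  set D := 2 * K * (1 + 2 / α) + 4 * K ^ 2 with hD
  have hD0 : 0 ≤ D := by positivity
  refine ⟨√D + √(2 * D / α), by positivity, fun u F G δ h hδ h0 hF hG => ?_⟩
  have hu := h.continuous
  rw [e2 F h.1, ENNReal.ofReal_le_ofReal_iff hδ, Real.sqrt_le_left hδ] at hF
  rw [e1 G h.2.1, ENNReal.ofReal_le_ofReal_iff hδ] at hG
  obtain ⟨t₀, ht₀, hmax⟩ := isCompact_Icc.exists_isMaxOn (nonempty_Icc.2 hT.le)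
    (f := fun t => ‖i (u t)‖) (Continuous.continuousOn (by fun_prop))
  -- with `M` the maximum of `‖i (u t)‖`, the term `2 * M * δ` is absorbed into `M ^ 2`
  set M := ‖i (u t₀)‖ with hMdef
  have hM0 : 0 ≤ M := norm_nonneg _
  have hen : ∀ t ∈ Icc 0 T, ‖i (u t)‖ ^ 2 + α / 2 * ∫ s in (0:ℝ)..t, ‖u s‖ ^ 2 ≤
      K * (δ ^ 2 + 2 / α * δ ^ 2 + 2 * M * δ) := fun t ht =>
    (h.energy hα hlam0 hcoer M hmax ht).trans (by gcongr)
  have hpos : ∀ t ∈ Icc 0 T, 0 ≤ α / 2 * ∫ s in (0:ℝ)..t, ‖u s‖ ^ 2 := fun t ht =>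
    mul_nonneg (by positivity) (intervalIntegral.integral_nonneg ht.1 fun s _ => by positivity)
  have hsq : 2 * (K * M * δ) ≤ M ^ 2 / 2 + 2 * K ^ 2 * δ ^ 2 := by
    nlinarith [sq_nonneg (M - 2 * K * δ)]
  have hMb : M ^ 2 ≤ D * δ ^ 2 := by
    have := hen t₀ ht₀
    have := hpos t₀ ht₀
    simp only [hD]
    nlinarith
  have hfin : ∀ t ∈ Icc 0 T, ‖i (u t)‖ ^ 2 + α / 2 * ∫ s in (0:ℝ)..t, ‖u s‖ ^ 2 ≤ D * δ ^ 2 := by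
    intro t ht
    have := hen t ht
    simp only [hD] at hMb ⊢
    nlinarith
  constructor
  · intro t ht
    have h1 : ‖i (u t)‖ ≤ √(D * δ ^ 2) :=
      Real.le_sqrt_of_sq_le (by linarith [hfin t ht, hpos t ht])
    rw [Real.sqrt_mul hD0, Real.sqrt_sq hδ] at h1
    refine h1.trans ?_
    gcongr
    linarith [Real.sqrt_nonneg (2 * D / α)]
  · rw [e2 u hu]
    refine ENNReal.ofReal_le_ofReal ?_
    have hTm := hfin T (right_mem_Icc.2 hT.le)
    have h1 : √(∫ s in (0:ℝ)..T, ‖u s‖ ^ 2) ≤ √(2 * D / α * δ ^ 2) := by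
      refine Real.sqrt_le_sqrt ?_
      have : 2 * D / α * δ ^ 2 = 2 / α * (D * δ ^ 2) := by ring
      rw [this]
      have h2 : ∫ s in (0:ℝ)..T, ‖u s‖ ^ 2 = 2 / α * (α / 2 * ∫ s in (0:ℝ)..T, ‖u s‖ ^ 2) := by
        field_simp
      rw [h2]
      exact mul_le_mul_of_nonneg_left (by linarith [sq_nonneg ‖i (u T)‖]) (by positivity)
    rw [Real.sqrt_mul (by positivity), Real.sqrt_sq hδ] at h1
    refine h1.trans ?_
    gcongr
    linarith [Real.sqrt_nonneg D]

/-! ### Passage to the limit and uniqueness -/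

/-- Density of classical data, now with an `L¹(0,T;H)` part: `f` is approximated by a continuous
`G`, and `exists_approx` is applied to `g + i† G`. -/
theorem exists_classical_approx {V H : Type*}
    [NormedAddCommGroup V] [InnerProductSpace ℝ V] [CompleteSpace V]
    [NormedAddCommGroup H] [InnerProductSpace ℝ H] [CompleteSpace H]
    (i : V →L[ℝ] H) (hdense : DenseRange i)
    (A : V →L[ℝ] (V →L[ℝ] ℝ)) (α lam0 : ℝ) (hα : 0 < α)
    (hcoer : ∀ u : V, α * ‖u‖ ^ 2 ≤ 2 * A u u + lam0 * ‖i u‖ ^ 2)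
    (T : ℝ) (hT : 0 < T) (x : H) (g : ℝ → V) (hg : MemLp g 2 (volume.restrict (Icc 0 T)))
    (f : ℝ → H) (hf : Integrable f (volume.restrict (Icc 0 T)))
    (δ : ℝ) (hδ : 0 < δ) :
    ∃ (u F : ℝ → V) (G : ℝ → H), IsClassicalSolution i A u F G ∧ ‖i (u 0) - x‖ ≤ δ ∧
      eLpNorm (F - g) 2 (volume.restrict (Icc 0 T)) ≤ ENNReal.ofReal δ ∧
      eLpNorm (G - f) 1 (volume.restrict (Icc 0 T)) ≤ ENNReal.ofReal δ := by
  obtain ⟨G, -, hGf, hG, -⟩ := (memLp_one_iff_integrable.2 hf).exists_hasCompactSupport_eLpNorm_sub_le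
    ENNReal.one_ne_top (ε := ENNReal.ofReal δ) (by simpa using hδ)
  set J : H →L[ℝ] V := i.adjoint with hJ
  have hJGc : Continuous fun t => J (G t) := by fun_prop
  have hJG : MemLp (fun t => J (G t)) 2 (volume.restrict (Icc 0 T)) := by
    obtain ⟨C, hC⟩ := isCompact_Icc.exists_bound_of_continuousOn (s := Icc 0 T) hJGc.continuousOn
    exact MemLp.of_bound hJGc.aestronglyMeasurable C ((ae_restrict_mem measurableSet_Icc).mono hC)
  obtain ⟨c, ψ, P, hψ, hP, he, h0, hPg⟩ := exists_approx i hdense A α lam0 hα hcoer T hT x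
    (g + fun t => J (G t)) (hg.add hJG) δ hδ
  refine ⟨fun t => c + ∫ s in (0:ℝ)..t, ψ s, fun t => P t - J (G t), G,
    ⟨hP.sub hJGc, hG, ψ, hψ, fun t => ?_, fun t v => ?_⟩, by simpa using h0, ?_, ?_⟩
  · exact (intervalIntegral.integral_hasDerivAt_right (hψ.intervalIntegrable _ _)
      (hψ.stronglyMeasurableAtFilter _ _) hψ.continuousAt).const_add c
  · rw [← he t v, inner_sub_left, hJ, ContinuousLinearMap.adjoint_inner_left]
    ring
  · convert hPg using 2
    ext t
    simp only [Pi.sub_apply, Pi.add_apply]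
    abel
  · rwa [eLpNorm_sub_comm]

theorem tendsto_eLpNorm_one {E : Type*} [NormedAddCommGroup E] {ν : Measure ℝ} [IsFiniteMeasure ν]
    {fn : ℕ → ℝ → E} {f : ℝ → E} (hf : AEStronglyMeasurable f ν)
    (hfn : ∀ n, AEStronglyMeasurable (fn n) ν)
    (h : Tendsto (fun n => eLpNorm (fn n - f) 2 ν) atTop (nhds 0)) :
    Tendsto (fun n => eLpNorm (fn n - f) 1 ν) atTop (nhds 0) := by
  have hle := fun n => eLpNorm_le_eLpNorm_mul_rpow_measure_univ (p := 1) (q := 2) (by norm_num)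
    ((hfn n).sub hf)
  refine tendsto_of_tendsto_of_tendsto_of_le_of_le tendsto_const_nhds ?_ (fun _ => zero_le) hle
  rw [← zero_mul (ν univ ^ (1 / (1 : ℝ≥0∞).toReal - 1 / (2 : ℝ≥0∞).toReal))]
  exact ENNReal.Tendsto.mul_const h
    (Or.inr (ENNReal.rpow_ne_top_of_nonneg (by norm_num) (measure_ne_top _ _)))

theorem tendsto_integral_Icc {E : Type*} [NormedAddCommGroup E] [NormedSpace ℝ E]
    {T : ℝ} {fn : ℕ → ℝ → E} {f : ℝ → E} (hf : Integrable f (volume.restrict (Icc 0 T)))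
    (hfn : ∀ n, Continuous (fn n))
    (h : Tendsto (fun n => eLpNorm (fn n - f) 1 (volume.restrict (Icc 0 T))) atTop (nhds 0))
    {t : ℝ} (ht : t ∈ Icc 0 T) :
    Tendsto (fun n => ∫ s in Icc 0 t, fn n s) atTop (nhds (∫ s in Icc 0 t, f s)) := by
  have := tendsto_setIntegral_of_L1' f hf.1
    (.of_forall fun n => (hfn n).integrableOn_Icc (a := 0) (b := T)) h (Icc 0 t)
  simpa only [Measure.restrict_restrict measurableSet_Icc,
    inter_eq_left.2 (Icc_subset_Icc_right ht.2)] using this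

/-- Existence: the classical solutions for data converging to `(x, g, f)` are Cauchy in
`C([0,T];H)` and in `L²(0,T;V)`, by stability applied to their differences. -/
theorem exists_weak_solution {V H : Type*}
    [NormedAddCommGroup V] [InnerProductSpace ℝ V] [CompleteSpace V]
    [NormedAddCommGroup H] [InnerProductSpace ℝ H] [CompleteSpace H]
    (i : V →L[ℝ] H) (hdense : DenseRange i)
    (A : V →L[ℝ] (V →L[ℝ] ℝ)) (α lam0 : ℝ) (hα : 0 < α) (hlam0 : 0 ≤ lam0)
    (hcoer : ∀ u : V, α * ‖u‖ ^ 2 ≤ 2 * A u u + lam0 * ‖i u‖ ^ 2)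
    (T : ℝ) (hT : 0 < T) (x : H) (g : ℝ → V) (hg : MemLp g 2 (volume.restrict (Icc 0 T)))
    (f : ℝ → H) (hf : Integrable f (volume.restrict (Icc 0 T))) :
    ∃ (u : ℝ → H) (w : ℝ → V), ContinuousOn u (Icc 0 T) ∧
      MemLp w 2 (volume.restrict (Icc 0 T)) ∧
      (∀ᵐ s ∂(volume.restrict (Icc (0:ℝ) T)), i (w s) = u s) ∧
      ∀ φ : V, ∀ t ∈ Icc (0:ℝ) T,
        ⟪u t, i φ⟫ = ⟪x, i φ⟫ - A (∫ s in Icc 0 t, w s) φ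
          + ⟪∫ s in Icc 0 t, g s, φ⟫ + ⟪∫ s in Icc 0 t, f s, i φ⟫ := by
  obtain ⟨C, hC, hstab⟩ := exists_stability_const i A α lam0 hα hlam0 hcoer T hT
  set μ := (volume : Measure ℝ).restrict (Icc 0 T) with hμ
  -- geometric rates, so that `Lp.cauchy_complete_eLpNorm` applies to the whole sequence
  set δ : ℕ → ℝ := fun n => (1 / 2) ^ n with hδ
  have hδ0 : ∀ n, 0 < δ n := fun n => by positivity
  have hδlim : Tendsto δ atTop (nhds 0) := tendsto_pow_atTop_nhds_zero_of_lt_one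
    (by norm_num) (by norm_num)
  have hδmono : ∀ N n, N ≤ n → δ n ≤ δ N := fun N n h =>
    pow_le_pow_of_le_one (by norm_num) (by norm_num) h
  have hofReal : Tendsto (fun n => ENNReal.ofReal (δ n)) atTop (nhds 0) := by
    simpa using ENNReal.tendsto_ofReal hδlim
  choose U F G hsol h0 hF hG using fun n =>
    exists_classical_approx i hdense A α lam0 hα hcoer T hT x g hg f hf (δ n) (hδ0 n)
  have hUc := fun n => (hsol n).continuous
  have hFm : ∀ n, AEStronglyMeasurable (F n) μ := fun n => (hsol n).1.aestronglyMeasurable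
  have hGm : ∀ n, AEStronglyMeasurable (G n) μ := fun n => (hsol n).2.1.aestronglyMeasurable
  have hdiff := fun n m => hstab _ _ _ (δ n + δ m) ((hsol n).sub (hsol m))
    (add_nonneg (hδ0 n).le (hδ0 m).le)
    (by
      have : i ((U n - U m) 0) = (i (U n 0) - x) - (i (U m 0) - x) := by simp
      rw [this]
      exact (norm_sub_le _ _).trans (add_le_add (h0 n) (h0 m)))
    (by
      have : F n - F m = (F n - g) - (F m - g) := by abel
      rw [this, ENNReal.ofReal_add (hδ0 n).le (hδ0 m).le]
      exact (eLpNorm_sub_le ((hFm n).sub hg.1) ((hFm m).sub hg.1) (by norm_num)).trans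
        (add_le_add (hF n) (hF m)))
    (by
      have : G n - G m = (G n - f) - (G m - f) := by abel
      rw [this, ENNReal.ofReal_add (hδ0 n).le (hδ0 m).le]
      exact (eLpNorm_sub_le ((hGm n).sub hf.1) ((hGm m).sub hf.1) le_rfl).trans
        (add_le_add (hG n) (hG m)))
  have hbd : ∀ N n m, N ≤ n → N ≤ m → C * (δ n + δ m) < (2 * C + 1) * δ N := by
    intro N n m hn hm
    have h1 := mul_le_mul_of_nonneg_left (add_le_add (hδmono N n hn) (hδmono N m hm)) hC
    linarith [hδ0 N]
  have hucs : UniformCauchySeqOn (fun n t => i (U n t)) atTop (Icc 0 T) := by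
    refine Metric.uniformCauchySeqOn_iff.2 fun ε hε => ?_
    obtain ⟨N, hN⟩ := ((hδlim.const_mul (2 * C + 1)).eventually_lt_const
      (by simpa using hε)).exists
    refine ⟨N, fun m hm n hn t ht => ?_⟩
    rw [dist_eq_norm, ← map_sub]
    exact ((hdiff m n).1 t ht).trans_lt ((hbd N m n hm hn).trans hN)
  have hlim : ∀ t, ∃ y, t ∈ Icc 0 T → Tendsto (fun n => i (U n t)) atTop (nhds y) := by
    intro t
    by_cases ht : t ∈ Icc 0 T
    · obtain ⟨y, hy⟩ := cauchySeq_tendsto_of_complete (hucs.cauchySeq ht)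
      exact ⟨y, fun _ => hy⟩
    · exact ⟨0, fun h => absurd h ht⟩
  choose u hu using hlim
  have hunif := hucs.tendstoUniformlyOn_of_tendsto fun t ht => hu t ht
  have hUm : ∀ n, MemLp (U n) 2 μ := by
    intro n
    obtain ⟨C, hC⟩ := isCompact_Icc.exists_bound_of_continuousOn (s := Icc 0 T)
      (hUc n).continuousOn
    exact MemLp.of_bound (hUc n).aestronglyMeasurable C
      ((ae_restrict_mem measurableSet_Icc).mono hC)
  have hsum : Summable fun N => (2 * C + 1) * δ N := summable_geometric_two.mul_left _
  obtain ⟨w, hw, hUw⟩ := Lp.cauchy_complete_eLpNorm (by norm_num) hUm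
    (B := fun N => ENNReal.ofReal ((2 * C + 1) * δ N)) hsum.tsum_ofReal_ne_top
    fun N n m hn hm => (hdiff n m).2.trans_lt <|
      (ENNReal.ofReal_lt_ofReal_iff (by have := hδ0 N; positivity)).2 (hbd N n m hn hm)
  refine ⟨u, w, hunif.continuousOn (Frequently.of_forall fun n =>
    (i.continuous.comp (hUc n)).continuousOn), hw, ?_, fun φ t ht => ?_⟩
  -- along a subsequence `U n → w` almost everywhere, which identifies the two limits
  · obtain ⟨ns, hns, hae⟩ := (tendstoInMeasure_of_tendsto_eLpNorm (by norm_num)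
      (fun n => (hUm n).1) hw.1 hUw).exists_seq_tendsto_ae
    filter_upwards [hae, ae_restrict_mem measurableSet_Icc] with s hs hsI
    exact tendsto_nhds_unique ((i.continuous.tendsto _).comp hs)
      ((hu s hsI).comp hns.tendsto_atTop)
  · have l0 : Tendsto (fun n => i (U n 0)) atTop (nhds x) :=
      tendsto_iff_norm_sub_tendsto_zero.2
        (squeeze_zero (fun _ => norm_nonneg _) h0 hδlim)
    have hF2 : Tendsto (fun n => eLpNorm (F n - g) 2 μ) atTop (nhds 0) :=
      tendsto_of_tendsto_of_tendsto_of_le_of_le tendsto_const_nhds hofReal (fun _ => zero_le) hF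
    have hG1 : Tendsto (fun n => eLpNorm (G n - f) 1 μ) atTop (nhds 0) :=
      tendsto_of_tendsto_of_tendsto_of_le_of_le tendsto_const_nhds hofReal (fun _ => zero_le) hG
    have lU := tendsto_integral_Icc (hw.integrable (by norm_num)) hUc
      (tendsto_eLpNorm_one hw.1 (fun n => (hUm n).1) hUw) ht
    have lF := tendsto_integral_Icc (hg.integrable (by norm_num)) (fun n => (hsol n).1)
      (tendsto_eLpNorm_one hg.1 hFm hF2) ht
    have lG := tendsto_integral_Icc hf (fun n => (hsol n).2.1) hG1 ht
    have r1 := (((l0.inner (tendsto_const_nhds (x := i φ))).sub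
      (((A.flip φ).continuous.tendsto _).comp lU)).add
      (lF.inner (tendsto_const_nhds (x := φ)))).add (lG.inner (tendsto_const_nhds (x := i φ)))
    refine tendsto_nhds_unique ((hu t ht).inner (tendsto_const_nhds (x := i φ)))
      (r1.congr fun n => ?_)
    exact ((hsol n).integrated φ ht.1).symm

/-- Grönwall's inequality in integral form, with zero initial value. -/
theorem eq_zero_of_le_integral {y : ℝ → ℝ} {k T : ℝ} (hk : 0 ≤ k)
    (hyc : ContinuousOn y (Icc 0 T)) (hy0 : ∀ t ∈ Icc 0 T, 0 ≤ y t)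
    (hy : ∀ t ∈ Icc 0 T, y t ≤ ∫ s in (0:ℝ)..t, k * y s) {t : ℝ} (ht : t ∈ Icc 0 T) : y t = 0 := by
  have hT : 0 ≤ T := ht.1.trans ht.2
  -- a continuous extension of `y` to the line makes the primitive differentiable everywhere
  set z : ℝ → ℝ := fun s => y (max 0 (min s T)) with hz
  have hzc : Continuous z := hyc.comp_continuous (by fun_prop) fun s => by simp [hT]
  have hzy : ∀ s ∈ Icc 0 T, z s = y s := fun s hs => by simp [hz, hs.1, hs.2]
  have hYc : Continuous fun s => k * z s := by fun_prop
  set Y : ℝ → ℝ := fun t => ∫ s in (0:ℝ)..t, k * z s with hY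
  have hYd : ∀ t, HasDerivAt Y (k * z t) t := fun t =>
    intervalIntegral.integral_hasDerivAt_right (hYc.intervalIntegrable _ _)
      (hYc.stronglyMeasurableAtFilter _ _) hYc.continuousAt
  have hle : ∀ t ∈ Icc 0 T, y t ≤ Y t := fun t ht => by
    refine (hy t ht).trans_eq (intervalIntegral.integral_congr fun s hs => ?_)
    rw [uIcc_of_le ht.1] at hs
    simp only [hzy s ⟨hs.1, hs.2.trans ht.2⟩]
  have hYb := norm_le_gronwallBound_of_norm_deriv_right_le (f := Y) (f' := fun t => k * z t)
    (δ := 0) (K := k) (ε := 0) (a := 0) (b := T)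
    (fun s _ => (hYd s).continuousAt.continuousWithinAt) (fun s _ => (hYd s).hasDerivWithinAt)
    (by simp [hY]) (fun s hs => by
      have hs' := Ico_subset_Icc_self hs
      have h0 := hy0 s hs'
      have h1 := hle s hs'
      rw [hzy s hs', Real.norm_of_nonneg (by positivity), Real.norm_of_nonneg (h0.trans h1),
        add_zero]
      gcongr) t ht
  rw [gronwallBound_ε0_δ0] at hYb
  have := hle t ht
  have := hy0 t ht
  have := Real.le_norm_self (Y t)
  linarith

/-- Uniqueness for the homogeneous problem. The time integral `W t = ∫ s in 0..t, w s` satisfies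
`⟪v t, i φ⟫ = - A (W t) φ`; testing with `φ = W t` and integrating gives
`‖i (W t)‖ ^ 2 = - 2 ∫ A(W, W) ≤ lam0 ∫ ‖i W‖ ^ 2`, so `W = 0` and then `v = 0`. This avoids
an energy identity for `v` itself. -/
theorem weak_solution_eq_zero {V H : Type*}
    [NormedAddCommGroup V] [InnerProductSpace ℝ V] [CompleteSpace V]
    [NormedAddCommGroup H] [InnerProductSpace ℝ H] [CompleteSpace H]
    (i : V →L[ℝ] H) (hi : Function.Injective i) (hdense : DenseRange i)
    (A : V →L[ℝ] (V →L[ℝ] ℝ)) (α lam0 : ℝ) (hα : 0 < α)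
    (hcoer : ∀ u : V, α * ‖u‖ ^ 2 ≤ 2 * A u u + lam0 * ‖i u‖ ^ 2)
    (T : ℝ) (v : ℝ → H) (w : ℝ → V) (hw : IntegrableOn w (Icc 0 T))
    (hae : ∀ᵐ s ∂(volume.restrict (Icc (0:ℝ) T)), i (w s) = v s)
    (heq : ∀ φ : V, ∀ t ∈ Icc (0:ℝ) T, ⟪v t, i φ⟫ = - A (∫ s in Icc 0 t, w s) φ)
    {t : ℝ} (ht : t ∈ Icc 0 T) : v t = 0 := by
  set W : ℝ → V := fun t => ∫ s in (0:ℝ)..t, w s with hW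
  have hWI : ∀ t ∈ Icc 0 T, ∫ s in Icc 0 t, w s = W t := fun t ht => by
    rw [hW, integral_Icc_eq_integral_Ioc, ← intervalIntegral.integral_of_le ht.1]
  have hT0 : 0 ≤ T := ht.1.trans ht.2
  have hWc : ContinuousOn W (Icc 0 T) := by
    have := intervalIntegral.continuousOn_primitive_interval (f := w) (μ := volume) (a := 0) (b := T)
      (by rwa [uIcc_of_le hT0])
    rwa [uIcc_of_le hT0] at this
  set y : ℝ → ℝ := fun t => ‖i (W t)‖ ^ 2 with hy
  have hyc : ContinuousOn y (Icc 0 T) := by fun_prop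
  set B : V →L[ℝ] V →L[ℝ] ℝ := (innerSL ℝ).bilinearComp i i with hBdef
  have hB : ∀ x y, B x y = ⟪i x, i y⟫ := fun x y => rfl
  have hineq : ∀ t ∈ Icc 0 T, y t ≤ ∫ s in (0:ℝ)..t, |lam0| * y s := by
    intro t ht
    have hsub : Ioc 0 t ⊆ Icc 0 T := fun s hs => ⟨hs.1.le, hs.2.trans ht.2⟩
    have h1 := symm_energy B (fun x y => real_inner_comm _ _) ht.1 (hw.mono_set hsub)
    have h2 : ∫ s in (0:ℝ)..t, B (W s) (w s) = ∫ s in (0:ℝ)..t, - A (W s) (W s) := by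
      rw [intervalIntegral.integral_of_le ht.1, intervalIntegral.integral_of_le ht.1]
      refine integral_congr_ae ?_
      filter_upwards [ae_restrict_of_ae_restrict_of_subset hsub hae,
        ae_restrict_mem measurableSet_Ioc] with s hs hsI
      rw [hB, hs, real_inner_comm, heq _ s (hsub hsI), hWI s (hsub hsI)]
    have h3 : y t = 2 * ∫ s in (0:ℝ)..t, - A (W s) (W s) := by
      rw [← h2, h1, hB, real_inner_self_eq_norm_sq]
    have hsub' : Icc 0 t ⊆ Icc 0 T := Icc_subset_Icc_right ht.2
    have hWc' := hWc.mono hsub'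
    have hyc' := hyc.mono hsub'
    rw [h3, ← intervalIntegral.integral_const_mul]
    refine intervalIntegral.integral_mono_on ht.1
      (ContinuousOn.intervalIntegrable_of_Icc ht.1 (by fun_prop))
      (ContinuousOn.intervalIntegrable_of_Icc ht.1 (by fun_prop)) fun s hs => ?_
    have := hcoer (W s)
    have e1 : lam0 * ‖i (W s)‖ ^ 2 ≤ |lam0| * ‖i (W s)‖ ^ 2 := by
      gcongr; exact le_abs_self _
    have e2 : 0 ≤ α * ‖W s‖ ^ 2 := by positivity
    simp only [hy]
    linarith
  have hy0 : y t = 0 :=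
    eq_zero_of_le_integral (abs_nonneg lam0) hyc (fun _ _ => by positivity) hineq ht
  have hW0 : W t = 0 := hi (by simpa [hy] using hy0)
  refine hdense.eq_zero_of_inner_left ℝ fun φ => ?_
  simp [heq φ t ht, hWI t ht, hW0]

theorem memLp_two_iff_lintegral {E : Type*} [NormedAddCommGroup E] {ν : Measure ℝ} {f : ℝ → E}
    (hf : AEStronglyMeasurable f ν) :
    MemLp f 2 ν ↔ (∫⁻ s, (‖f s‖₊ : ℝ≥0∞) ^ 2 ∂ν) < ⊤ := by
  rw [MemLp, and_iff_right hf, eLpNorm_lt_top_iff_lintegral_rpow_enorm_lt_top (by norm_num)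
    (by norm_num)]
  norm_num [enorm_eq_nnnorm]

end

/-- **Existence and uniqueness for the deterministic linear evolution equation**
(Temam, Ch. III): given the Gelfand triple `V ⊂ H ⊂ V'`, a coercive bounded linear
operator `𝒜 : V → V'`, `u₀ ∈ H`, `f₁ ∈ L²([0,T];V')` and `f₂ ∈ L¹([0,T];H)`, there is
a continuous `u : [0,T] → H` with a `V`-valued square-integrable representative `w`
solving the weak formulation, and `u` is unique. -/
theorem exists_unique_weak_solution {V H : Type*}
    [NormedAddCommGroup V] [InnerProductSpace ℝ V] [CompleteSpace V] [SecondCountableTopology V]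
    [NormedAddCommGroup H] [InnerProductSpace ℝ H] [CompleteSpace H] [SecondCountableTopology H]
    (i : V →L[ℝ] H) (hi : Function.Injective i) (hdense : DenseRange i)
    (A : V →L[ℝ] (V →L[ℝ] ℝ))
    (α lam0 : ℝ) (hα : 0 < α) (hlam0 : 0 ≤ lam0)
    (hcoer : ∀ u : V, α * ‖u‖ ^ 2 ≤ 2 * A u u + lam0 * ‖i u‖ ^ 2)
    (T : ℝ) (hT : 0 < T) (u₀ : H)
    (f₁ : ℝ → (V →L[ℝ] ℝ))
    (hf₁meas : AEStronglyMeasurable f₁ (volume.restrict (Set.Icc 0 T)))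
    (hf₁L2 : (∫⁻ s in Set.Icc (0:ℝ) T, (‖f₁ s‖₊ : ℝ≥0∞) ^ 2) < ⊤)
    (f₂ : ℝ → H) (hf₂ : IntegrableOn f₂ (Set.Icc 0 T) volume) :
    (∃ u w, IsWeakSolution i A T u₀ f₁ f₂ u w) ∧
    ∀ u w u' w', IsWeakSolution i A T u₀ f₁ f₂ u w →
      IsWeakSolution i A T u₀ f₁ f₂ u' w' →
      ∀ t ∈ Set.Icc (0:ℝ) T, u t = u' t := by
  set D := (InnerProductSpace.toDual ℝ V).symm with hD
  have hf₁ : MemLp f₁ 2 (volume.restrict (Set.Icc 0 T)) :=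
    (memLp_two_iff_lintegral hf₁meas).2 hf₁L2
  have hsub : ∀ t ∈ Set.Icc (0:ℝ) T, Set.Icc 0 t ⊆ Set.Icc 0 T := fun t ht =>
    Set.Icc_subset_Icc_right ht.2
  have hAint : ∀ w : ℝ → V, IntegrableOn w (Set.Icc 0 T) → ∀ (φ : V), ∀ t ∈ Set.Icc (0:ℝ) T,
      A (∫ s in Set.Icc 0 t, w s) φ = ∫ s in Set.Icc 0 t, A (w s) φ := fun w hw φ t ht =>
    ((A.flip φ).integral_comp_comm (hw.mono_set (hsub t ht))).symm
  constructor
  · have hg : MemLp (fun s => D (f₁ s)) 2 (volume.restrict (Set.Icc 0 T)) :=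
      hf₁.of_le (D.continuous.comp_aestronglyMeasurable hf₁meas) (ae_of_all _ fun s => by simp)
    obtain ⟨u, w, hu, hw, hae, heq⟩ := exists_weak_solution i hdense A α lam0 hα hlam0 hcoer T hT
      u₀ (fun s => D (f₁ s)) hg f₂ hf₂
    refine ⟨u, w, hu, hw.1, (memLp_two_iff_lintegral hw.1).1 hw, hae, fun φ t ht => ?_⟩
    have e1 := ((innerSL ℝ).flip φ).integral_comp_comm
      ((hg.integrable (by norm_num)).mono_measure (Measure.restrict_mono_set _ (hsub t ht)))
    have e2 := ((innerSL ℝ).flip (i φ)).integral_comp_comm (hf₂.mono_set (hsub t ht))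
    simp only [ContinuousLinearMap.flip_apply, innerSL_apply_apply, hD,
      InnerProductSpace.toDual_symm_apply] at e1 e2
    rw [heq φ t ht, hAint w (hw.integrable (by norm_num)) φ t ht, e1, e2]
  · rintro u w u' w' ⟨-, hw, hw2, hae, heq⟩ ⟨-, hw', hw2', hae', heq'⟩ t ht
    have hwI : IntegrableOn w (Set.Icc 0 T) :=
      ((memLp_two_iff_lintegral hw).2 hw2).integrable (by norm_num)
    have hwI' : IntegrableOn w' (Set.Icc 0 T) :=
      ((memLp_two_iff_lintegral hw').2 hw2').integrable (by norm_num)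
    refine sub_eq_zero.1 (weak_solution_eq_zero i hi hdense A α lam0 hα hcoer T (u - u') (w - w')
      (hwI.sub hwI') ?_ (fun φ t ht => ?_) ht)
    · filter_upwards [hae, hae'] with s hs hs'
      simp [hs, hs']
    · rw [Pi.sub_apply, inner_sub_left, heq φ t ht, heq' φ t ht, hAint _ (hwI.sub hwI') φ t ht]
      have e := integral_sub
        ((A.flip φ).integrable_comp (hwI.mono_set (hsub t ht)))
        ((A.flip φ).integrable_comp (hwI'.mono_set (hsub t ht)))
      simp only [ContinuousLinearMap.flip_apply] at e
      simp only [Pi.sub_apply, map_sub, sub_apply]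
      rw [e]
      ring
end
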